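/- Let ε ∈ (0,1], k ∈ {0,1}, ε_k = (k+ε)/2, and let p be a strictly pseudoconvex boundary point of class C^{k+2,ε} of a domain Ω in ℂⁿ. Then there exist a constant C > 0 and a neighborhood U of p such that for every z ∈ Ω ∩ U and every X ∈ ℂⁿ, κ_Ω(z;X) ≥ (1 − C·δ_Ω(z)^{ε_k}) · ( |⟨∂δ_Ω(z),X⟩|²/δ_Ω(z)² + L(z;X)/δ_Ω(z) )^{1/2}. -/

import Mathlib

open Metric MeasureTheory Set
open scoped NNReal ENNReal

noncomputable section

/-- Complex Euclidean `n`-space. -/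
abbrev Cn (n : ℕ) := EuclideanSpace ℂ (Fin n)

variable {n : ℕ}

instance : MeasurableSpace (Cn n) := borel _
instance : BorelSpace (Cn n) := ⟨rfl⟩
instance : InnerProductSpace ℝ (Cn n) := InnerProductSpace.rclikeToReal ℂ _

/-- `δ_Ω(z)`: the Euclidean distance from `z` to the boundary of `Ω`. -/
def bdist (Ω : Set (Cn n)) (z : Cn n) : ℝ := Metric.infDist z (frontier Ω)

/-- The squeezing function `σ_Ω(z)` of a (bounded) domain `Ω`. -/
def squeezing (Ω : Set (Cn n)) (z : Cn n) : ℝ :=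
  sSup {r : ℝ | 0 < r ∧ ∃ f : Cn n → Cn n,
    DifferentiableOn ℂ f Ω ∧ Set.InjOn f Ω ∧ Set.MapsTo f Ω (Metric.ball 0 1) ∧
    f z = 0 ∧ Metric.ball (0 : Cn n) r ⊆ f '' Ω}

/-- The Kobayashi metric `κ_Ω(z;X)`. -/
def kobayashi (Ω : Set (Cn n)) (z X : Cn n) : ℝ :=
  sInf {r : ℝ | ∃ (α : ℂ) (φ : ℂ → Cn n),
    DifferentiableOn ℂ φ (Metric.ball 0 1) ∧ Set.MapsTo φ (Metric.ball 0 1) Ω ∧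
    φ 0 = z ∧ α • deriv φ 0 = X ∧ r = ‖α‖}

/-- The Carathéodory metric `γ_Ω(z;X)`. -/
def caratheodory (Ω : Set (Cn n)) (z X : Cn n) : ℝ :=
  sSup {r : ℝ | ∃ f : Cn n → ℂ,
    DifferentiableOn ℂ f Ω ∧ Set.MapsTo f Ω (Metric.ball 0 1) ∧
    r = ‖fderiv ℂ f z X‖}

/-- `⟨∂ρ(q),X⟩ = Σ_j (∂ρ/∂z_j)(q) X_j`, expressed via the real differential:
`⟨∂ρ(q),X⟩ = (Dρ(q)X - i·Dρ(q)(iX))/2`. -/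
def cderiv (ρ : Cn n → ℝ) (q X : Cn n) : ℂ :=
  (((fderiv ℝ ρ q X : ℝ) : ℂ) - Complex.I * ((fderiv ℝ ρ q (Complex.I • X) : ℝ) : ℂ)) / 2

/-- The Levi form `L_ρ(q;X) = Σ_{j,k} (∂²ρ/∂z_j∂z̄_k)(q) X_j X̄_k`, expressed via the real
second differential: `L_ρ(q;X) = (D²ρ(q)[X,X] + D²ρ(q)[iX,iX])/4`. -/
def leviForm (ρ : Cn n → ℝ) (q X : Cn n) : ℝ :=
  (fderiv ℝ (fun w => fderiv ℝ ρ w X) q X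
    + fderiv ℝ (fun w => fderiv ℝ ρ w (Complex.I • X)) q (Complex.I • X)) / 4

/-- `p` is a strictly pseudoconvex boundary point of `Ω` of class `C^{m,ε}`. -/
def IsStrictPscPtHolder (Ω : Set (Cn n)) (p : Cn n) (m : ℕ) (ε : ℝ) : Prop :=
  p ∈ frontier Ω ∧ ∃ W : Set (Cn n), IsOpen W ∧ p ∈ W ∧ ∃ ρ : Cn n → ℝ,
    ContDiffOn ℝ m ρ W ∧
    (∃ C : ℝ≥0, HolderOnWith C ε.toNNReal (iteratedFDeriv ℝ m ρ) W) ∧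
    Ω ∩ W = {z ∈ W | ρ z < 0} ∧
    (∀ q ∈ frontier Ω ∩ W, fderiv ℝ ρ q ≠ 0) ∧
    (∀ q ∈ frontier Ω ∩ W, ∀ X : Cn n, X ≠ 0 → cderiv ρ q X = 0 → 0 < leviForm ρ q X)

/-- `p` is a strictly pseudoconvex boundary point of `Ω` of class `C²`. -/
def IsStrictPscPtC2 (Ω : Set (Cn n)) (p : Cn n) : Prop :=
  p ∈ frontier Ω ∧ ∃ W : Set (Cn n), IsOpen W ∧ p ∈ W ∧ ∃ ρ : Cn n → ℝ,
    ContDiffOn ℝ 2 ρ W ∧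
    Ω ∩ W = {z ∈ W | ρ z < 0} ∧
    (∀ q ∈ frontier Ω ∩ W, fderiv ℝ ρ q ≠ 0) ∧
    (∀ q ∈ frontier Ω ∩ W, ∀ X : Cn n, X ≠ 0 → cderiv ρ q X = 0 → 0 < leviForm ρ q X)

/-- An open set `D ⊆ ℂⁿ` is pseudoconvex: `u = -log dist(·, Dᶜ)` is plurisubharmonic on `D`. -/
def IsPseudoconvex (D : Set (Cn n)) : Prop :=
  IsOpen D ∧
  UpperSemicontinuousOn (fun z => -Real.log (Metric.infDist z Dᶜ)) D ∧
  ∀ a ∈ D, ∀ w : Cn n, ∀ r : ℝ, 0 < r →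
    (∀ l : ℂ, ‖l‖ ≤ r → a + l • w ∈ D) →
    -Real.log (Metric.infDist a Dᶜ) ≤
      (1 / (2 * Real.pi)) * ∫ θ in (0:ℝ)..(2 * Real.pi),
        -Real.log (Metric.infDist (a + ((r : ℂ) * Complex.exp (θ * Complex.I)) • w) Dᶜ)

/-- `cl(Ω)` admits a Stein neighborhood basis. -/
def HasSteinBasis (Ω : Set (Cn n)) : Prop :=
  ∀ W : Set (Cn n), IsOpen W → closure Ω ⊆ W →
    ∃ U : Set (Cn n), IsPseudoconvex U ∧ closure Ω ⊆ U ∧ U ⊆ W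

/-- The squared `L²`-norm of `f` on `D` (as an extended nonnegative real). -/
def L2normSq (D : Set (Cn n)) (f : Cn n → ℂ) : ℝ≥0∞ := ∫⁻ w in D, (‖f w‖₊ : ℝ≥0∞) ^ 2

/-- `J⁰_D(z) = sup {|f(z)|² : f ∈ L²_h(D), ‖f‖_D ≤ 1}`; equals the Bergman kernel on the
diagonal. -/
def J0 (D : Set (Cn n)) (z : Cn n) : ℝ :=
  sSup {v : ℝ | ∃ f : Cn n → ℂ, DifferentiableOn ℂ f D ∧ L2normSq D f ≤ 1 ∧ v = ‖f z‖ ^ 2}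

/-- `J¹_D(z;X) = sup {|f'(z)X|² : f ∈ L²_h(D), ‖f‖_D ≤ 1, f(z) = 0}`. -/
def J1 (D : Set (Cn n)) (z X : Cn n) : ℝ :=
  sSup {v : ℝ | ∃ f : Cn n → ℂ, DifferentiableOn ℂ f D ∧ L2normSq D f ≤ 1 ∧ f z = 0 ∧
    v = ‖fderiv ℂ f z X‖ ^ 2}

/-- `J²_D(z;X,Y) = sup {|Σ_{j,k} f_{ζ_jζ_k}(z) X_j Y_k|² : f ∈ L²_h(D), ‖f‖_D ≤ 1,
f(z) = 0, f'(z) = 0}`. -/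
def J2 (D : Set (Cn n)) (z X Y : Cn n) : ℝ :=
  sSup {v : ℝ | ∃ f : Cn n → ℂ, DifferentiableOn ℂ f D ∧ L2normSq D f ≤ 1 ∧ f z = 0 ∧
    fderiv ℂ f z = 0 ∧ v = ‖fderiv ℂ (fun w => fderiv ℂ f w Y) z X‖ ^ 2}

/-- The Bergman metric `β_D(z;X) = (J¹_D(z;X)/J⁰_D(z))^{1/2}`. -/
def bergman (D : Set (Cn n)) (z X : Cn n) : ℝ := Real.sqrt (J1 D z X / J0 D z)

/-- The bisectional curvature of the Bergman metric. -/
def bisect (D : Set (Cn n)) (z X Y : Cn n) : ℝ :=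
  2 - J0 D z * J2 D z X Y / (J1 D z X * J1 D z Y)

/-- The holomorphic sectional curvature `s_D(z;X)` of the Bergman metric. -/
def sectCurv (D : Set (Cn n)) (z X : Cn n) : ℝ := bisect D z X X

/-- The Ricci curvature `r_D(z;X)` of the Bergman metric (w.r.t. the standard basis). -/
def ricciCurv (D : Set (Cn n)) (z X : Cn n) : ℝ :=
  ∑ j : Fin n, bisect D z (EuclideanSpace.single j 1) X

/-- The scalar curvature `t_D(z)` of the Bergman metric. -/
def scalarCurv (D : Set (Cn n)) (z : Cn n) : ℝ :=
  ∑ j : Fin n, ricciCurv D z (EuclideanSpace.single j 1)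

/-- `M(z;X) = ( |⟨∂δ_Ω(z),X⟩|²/δ_Ω(z)² + L(z;X)/δ_Ω(z) )^{1/2}`, where `L` is the Levi form
of `-δ_Ω`. -/
def Mfun (Ω : Set (Cn n)) (z X : Cn n) : ℝ :=
  Real.sqrt (‖cderiv (bdist Ω) z X‖ ^ 2 / (bdist Ω z) ^ 2
    + leviForm (fun w => -(bdist Ω w)) z X / bdist Ω z)

/-- The sesquilinear form of the Bergman metric, recovered from `β²` by polarization. -/
def bergForm (D : Set (Cn n)) (z X Y : Cn n) : ℂ :=
  (((J1 D z (X + Y) / J0 D z : ℝ) : ℂ) - ((J1 D z (X - Y) / J0 D z : ℝ) : ℂ)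
    + Complex.I * ((J1 D z (X + Complex.I • Y) / J0 D z : ℝ) : ℂ)
    - Complex.I * ((J1 D z (X - Complex.I • Y) / J0 D z : ℝ) : ℂ)) / 4

/-- The Hermitian matrix `(B_{jk}(z))` of the Bergman metric in the standard coordinates. -/
def bergMat (D : Set (Cn n)) (z : Cn n) : Matrix (Fin n) (Fin n) ℂ :=
  fun j k => bergForm D z (EuclideanSpace.single j 1) (EuclideanSpace.single k 1)

/-- The canonical Bergman invariant `J_D(z) = Δ_D(z)/K_D(z)`. -/
def canonInvariant (D : Set (Cn n)) (z : Cn n) : ℂ :=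
  (bergMat D z).det / ((J0 D z : ℝ) : ℂ)

namespace KL
open Filter Topology

section HCsec
variable {E : Type} [NormedAddCommGroup E] [NormedSpace ℝ E]

/-- Local Hölder class `C^{m,ε}` near a point. -/
def HC (ε : ℝ) : ℕ → ∀ {F : Type} [NormedAddCommGroup F] [NormedSpace ℝ F], (E → F) → E → Prop
  | 0, _, _, _, f, x => ∃ C r : ℝ, 0 ≤ C ∧ 0 < r ∧ ∀ y ∈ ball x r, ∀ y' ∈ ball x r,
      ‖f y - f y'‖ ≤ C * ‖y - y'‖ ^ ε
  | m + 1, _, _, _, f, x => (∀ᶠ y in 𝓝 x, DifferentiableAt ℝ f y) ∧ HC ε m (fderiv ℝ f) x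

variable {F G K : Type} [NormedAddCommGroup F] [NormedSpace ℝ F]
  [NormedAddCommGroup G] [NormedSpace ℝ G] [NormedAddCommGroup K] [NormedSpace ℝ K]
variable {ε : ℝ}

theorem HC.zero_iff (f : E → F) (x : E) : HC ε 0 f x ↔ ∃ C r : ℝ, 0 ≤ C ∧ 0 < r ∧
    ∀ y ∈ ball x r, ∀ y' ∈ ball x r, ‖f y - f y'‖ ≤ C * ‖y - y'‖ ^ ε := Iff.rfl

theorem HC.succ_iff (m : ℕ) (f : E → F) (x : E) : HC ε (m+1) f x ↔
    (∀ᶠ y in 𝓝 x, DifferentiableAt ℝ f y) ∧ HC ε m (fderiv ℝ f) x := Iff.rfl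

theorem HC.congr {m : ℕ} : ∀ {F : Type} [NormedAddCommGroup F] [NormedSpace ℝ F] {f g : E → F} {x : E},
    HC ε m f x → f =ᶠ[𝓝 x] g → HC ε m g x := by
  induction m with
  | zero =>
    intro F _ _ f g x h hfg
    obtain ⟨C, r, hC, hr, h⟩ := h
    obtain ⟨s, hs, h2⟩ := Metric.eventually_nhds_iff_ball.1 hfg
    refine ⟨C, min r s, hC, lt_min hr hs, fun y hy y' hy' => ?_⟩
    rw [← h2 y (ball_subset_ball (min_le_right _ _) hy), ← h2 y' (ball_subset_ball (min_le_right _ _) hy')]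
    exact h y (ball_subset_ball (min_le_left _ _) hy) y' (ball_subset_ball (min_le_left _ _) hy')
  | succ m ih =>
    intro F _ _ f g x h hfg
    refine ⟨?_, ih h.2 hfg.fderiv⟩
    filter_upwards [h.1, hfg.eventuallyEq_nhds] with y h1 h2
    exact (h2.differentiableAt_iff).1 h1

theorem HC.contDiffAt (hε : 0 < ε) {m : ℕ} : ∀ {F : Type} [NormedAddCommGroup F] [NormedSpace ℝ F] {f : E → F} {x : E},
    HC ε m f x → ContDiffAt ℝ m f x := by
  induction m with
  | zero =>
    intro F _ _ f x h
    obtain ⟨C, r, hC, hr, h⟩ := h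
    rw [Nat.cast_zero, contDiffAt_zero]
    refine ⟨ball x r, ball_mem_nhds x hr, fun y hy => ?_⟩
    rw [ContinuousWithinAt, tendsto_iff_norm_sub_tendsto_zero]
    have : Tendsto (fun y' => C * ‖y' - y‖ ^ ε) (𝓝[ball x r] y) (𝓝 0) := by
      have h1 : Continuous (fun y' : E => C * ‖y' - y‖ ^ ε) :=
        continuous_const.mul ((continuous_id.sub continuous_const).norm.rpow_const (fun _ => Or.inr hε.le))
      have h2 := (h1.tendsto y).mono_left (nhdsWithin_le_nhds (s := ball x r))
      simpa [Real.zero_rpow hε.ne'] using h2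
    refine squeeze_zero' (Eventually.of_forall fun _ => norm_nonneg _) ?_ this
    filter_upwards [self_mem_nhdsWithin] with y' hy'
    exact h y' hy' y hy
  | succ m ih =>
    intro F _ _ f x h
    have := (contDiffAt_succ_iff_hasFDerivAt (𝕜 := ℝ) (f := f) (x := x) (n := m)).2
      ⟨fderiv ℝ f, ⟨_, h.1, fun y hy => DifferentiableAt.hasFDerivAt hy⟩, ih h.2⟩
    exact_mod_cast this

theorem HC.of_contDiffAt (hε1 : ε ≤ 1) {m : ℕ} : ∀ {F : Type} [NormedAddCommGroup F] [NormedSpace ℝ F] {f : E → F} {x : E},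
    ContDiffAt ℝ (m+1 : ℕ) f x → HC ε m f x := by
  induction m with
  | zero =>
    intro F _ _ f x h
    obtain ⟨K, t, ht, hl⟩ := ContDiffAt.exists_lipschitzOnWith (f := f) (x := x) (by exact_mod_cast h)
    obtain ⟨r, hr, hrt⟩ := Metric.mem_nhds_iff.1 ht
    refine ⟨K, min r (1/2), K.2, lt_min hr (by norm_num), fun y hy y' hy' => ?_⟩
    have h1 := hl.norm_sub_le (hrt (ball_subset_ball (min_le_left _ _) hy)) (hrt (ball_subset_ball (min_le_left _ _) hy'))
    refine h1.trans (mul_le_mul_of_nonneg_left ?_ K.2)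
    have h2 : ‖y - y'‖ ≤ 1 := by
      have a := ball_subset_ball (min_le_right r (1/2)) hy
      have b := ball_subset_ball (min_le_right r (1/2)) hy'
      rw [mem_ball] at a b
      rw [← dist_eq_norm]
      have := dist_triangle_right y y' x
      linarith
    rcases eq_or_lt_of_le (norm_nonneg (y - y')) with h0 | h0
    · rw [← h0]; exact Real.rpow_nonneg le_rfl _
    · calc ‖y - y'‖ = ‖y - y'‖ ^ (1:ℝ) := (Real.rpow_one _).symm
        _ ≤ _ := Real.rpow_le_rpow_of_exponent_ge h0 h2 hε1
  | succ m ih =>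
    intro F _ _ f x h
    refine ⟨?_, ih ?_⟩
    · have := (h.of_le (m := 1) (by norm_cast; omega)).eventually (by simp)
      filter_upwards [this] with y hy
      exact hy.differentiableAt one_ne_zero
    · exact h.fderiv_right (m := ((m+1:ℕ) : WithTop ℕ∞)) (by norm_cast)

theorem HC.mono (hε : 0 < ε) (hε1 : ε ≤ 1) {m : ℕ} : ∀ {F : Type} [NormedAddCommGroup F] [NormedSpace ℝ F] {f : E → F} {x : E},
    HC ε (m+1) f x → HC ε m f x := by
  intro F _ _ f x h
  exact HC.of_contDiffAt hε1 (h.contDiffAt hε)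

theorem HC.mono_le (hε : 0 < ε) (hε1 : ε ≤ 1) {m j : ℕ} (hj : j ≤ m) {f : E → F} {x : E}
    (h : HC ε m f x) : HC ε j f x := by
  induction m with
  | zero => obtain rfl : j = 0 := by omega
            exact h
  | succ m ih =>
    rcases Nat.lt_or_ge m j with h1 | h1
    · obtain rfl : j = m + 1 := by omega
      exact h
    · exact ih h1 (h.mono hε hε1)

theorem HC.add {m : ℕ} : ∀ {F : Type} [NormedAddCommGroup F] [NormedSpace ℝ F] {f g : E → F} {x : E},
    HC ε m f x → HC ε m g x → HC ε m (fun y => f y + g y) x := by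
  induction m with
  | zero =>
    intro F _ _ f g x ⟨C, r, hC, hr, h⟩ ⟨C', r', hC', hr', h'⟩
    refine ⟨C + C', min r r', by positivity, lt_min hr hr', fun y hy y' hy' => ?_⟩
    have a := h y (ball_subset_ball (min_le_left _ _) hy) y' (ball_subset_ball (min_le_left _ _) hy')
    have b := h' y (ball_subset_ball (min_le_right _ _) hy) y' (ball_subset_ball (min_le_right _ _) hy')
    calc _ = ‖(f y - f y') + (g y - g y')‖ := by rw [add_sub_add_comm]
      _ ≤ _ := norm_add_le _ _
      _ ≤ _ := by linarith
  | succ m ih =>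
    intro F _ _ f g x h h'
    refine ⟨?_, (ih h.2 h'.2).congr ?_⟩
    · filter_upwards [h.1, h'.1] with y h1 h2 using h1.add h2
    · filter_upwards [h.1, h'.1] with y h1 h2
      exact (fderiv_add h1 h2).symm

theorem HC.clm {m : ℕ} : ∀ {F G : Type} [NormedAddCommGroup F] [NormedSpace ℝ F]
    [NormedAddCommGroup G] [NormedSpace ℝ G] (L : F →L[ℝ] G) {f : E → F} {x : E},
    HC ε m f x → HC ε m (fun y => L (f y)) x := by
  induction m with
  | zero =>
    intro F G _ _ _ _ L f x ⟨C, r, hC, hr, h⟩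
    refine ⟨‖L‖ * C, r, by positivity, hr, fun y hy y' hy' => ?_⟩
    rw [← map_sub, mul_assoc]
    exact (L.le_opNorm _).trans (mul_le_mul_of_nonneg_left (h y hy y' hy') (norm_nonneg _))
  | succ m ih =>
    intro F G _ _ _ _ L f x h
    refine ⟨?_, (ih (ContinuousLinearMap.compL ℝ E F G L) h.2).congr ?_⟩
    · filter_upwards [h.1] with y h1 using L.differentiableAt.comp y h1
    · filter_upwards [h.1] with y h1
      exact ((L.hasFDerivAt.comp y h1.hasFDerivAt).fderiv).symm

theorem HC.bilin (hε : 0 < ε) (hε1 : ε ≤ 1) {m : ℕ} : ∀ {F G K : Type} [NormedAddCommGroup F] [NormedSpace ℝ F]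
    [NormedAddCommGroup G] [NormedSpace ℝ G] [NormedAddCommGroup K] [NormedSpace ℝ K]
    (B : F →L[ℝ] G →L[ℝ] K) {f : E → F} {g : E → G} {x : E},
    HC ε m f x → HC ε m g x → HC ε m (fun y => B (f y) (g y)) x := by
  induction m with
  | zero =>
    intro F G K _ _ _ _ _ _ B f g x hf hg
    have cf : ContinuousAt f x := (hf.contDiffAt hε).continuousAt
    have cg : ContinuousAt g x := (hg.contDiffAt hε).continuousAt
    obtain ⟨C, r, hC, hr, h⟩ := hf
    obtain ⟨C', r', hC', hr', h'⟩ := hg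
    obtain ⟨s, hs, h3⟩ := Metric.eventually_nhds_iff_ball.1 ((cf.norm.eventually_lt_const (lt_add_one ‖f x‖)).and
      (cg.norm.eventually_lt_const (lt_add_one ‖g x‖)))
    refine ⟨‖B‖ * (C * (‖g x‖ + 1) + (‖f x‖ + 1) * C'), min s (min r r'), by positivity, lt_min hs (lt_min hr hr'), fun y hy y' hy' => ?_⟩
    have hyr := ball_subset_ball ((min_le_right _ _).trans (min_le_left r r')) hy
    have hyr' := ball_subset_ball ((min_le_right _ _).trans (min_le_left r r')) hy'
    have hyr2 := ball_subset_ball ((min_le_right _ _).trans (min_le_right r r')) hy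
    have hyr2' := ball_subset_ball ((min_le_right _ _).trans (min_le_right r r')) hy'
    have a := h y hyr y' hyr'
    have b := h' y hyr2 y' hyr2'
    have c1 := (h3 y' (ball_subset_ball (min_le_left _ _) hy')).1
    have c2 := (h3 y (ball_subset_ball (min_le_left _ _) hy)).2
    have e1 : B (f y) (g y) - B (f y') (g y') = B (f y - f y') (g y) + B (f y') (g y - g y') := by
      simp
    rw [e1]
    have t1 := B.le_opNorm₂ (f y - f y') (g y)
    have t2 := B.le_opNorm₂ (f y') (g y - g y')
    have hp : 0 ≤ ‖y - y'‖ ^ ε := by positivity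
    calc _ ≤ ‖B (f y - f y') (g y)‖ + ‖B (f y') (g y - g y')‖ := norm_add_le _ _
      _ ≤ ‖B‖ * (C * ‖y - y'‖ ^ ε) * (‖g x‖ + 1) + ‖B‖ * (‖f x‖ + 1) * (C' * ‖y - y'‖ ^ ε) := by
        refine add_le_add (t1.trans ?_) (t2.trans ?_) <;> gcongr
      _ = _ := by ring
  | succ m ih =>
    intro F G K _ _ _ _ _ _ B f g x hf hg
    refine ⟨?_, HC.congr (HC.add (ih (ContinuousLinearMap.precompR E B) (hf.mono hε hε1) hg.2)
      (ih (ContinuousLinearMap.precompL E B) hf.2 (hg.mono hε hε1))) ?_⟩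
    · filter_upwards [hf.1, hg.1] with y h1 h2
      exact (B.hasFDerivAt_of_bilinear h1.hasFDerivAt h2.hasFDerivAt).differentiableAt
    · filter_upwards [hf.1, hg.1] with y h1 h2
      exact (B.hasFDerivAt_of_bilinear h1.hasFDerivAt h2.hasFDerivAt).fderiv.symm

theorem HC.prodMk {m : ℕ} {f : E → F} {g : E → G} {x : E} (hf : HC ε m f x) (hg : HC ε m g x) :
    HC ε m (fun y => (f y, g y)) x := by
  have := (hf.clm (ContinuousLinearMap.inl ℝ F G)).add (hg.clm (ContinuousLinearMap.inr ℝ F G))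
  refine this.congr (Eventually.of_forall fun y => ?_)
  simp

theorem HC.comp (hε : 0 < ε) (hε1 : ε ≤ 1) {m : ℕ} : ∀ {F G : Type} [NormedAddCommGroup F] [NormedSpace ℝ F]
    [NormedAddCommGroup G] [NormedSpace ℝ G] {g : F → G} {f : E → F} {x : E},
    HC ε m g (f x) → HC ε m f x → ContDiffAt ℝ 1 f x → HC ε m (fun y => g (f y)) x := by
  induction m with
  | zero =>
    intro F G _ _ _ _ g f x hg _ hf
    obtain ⟨K, t, ht, hl⟩ := hf.exists_lipschitzOnWith
    obtain ⟨C, r, hC, hr, h⟩ := hg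
    obtain ⟨s, hs, h3⟩ := Metric.mem_nhds_iff.1 (inter_mem ht (hf.continuousAt.preimage_mem_nhds (ball_mem_nhds _ hr)))
    refine ⟨C * K ^ ε, s, by positivity, hs, fun y hy y' hy' => ?_⟩
    have a := h _ (h3 hy).2 _ (h3 hy').2
    refine a.trans ?_
    rw [mul_assoc, ← Real.mul_rpow K.coe_nonneg (norm_nonneg _)]
    gcongr
    exact hl.norm_sub_le (h3 hy).1 (h3 hy').1
  | succ m ih =>
    intro F G _ _ _ _ g f x hg hf h1
    have key : ∀ᶠ y in 𝓝 x, DifferentiableAt ℝ f y ∧ DifferentiableAt ℝ g (f y) :=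
      hf.1.and (h1.continuousAt.eventually hg.1)
    refine ⟨?_, HC.congr (HC.bilin hε hε1 (ContinuousLinearMap.compL ℝ E F G) (ih hg.2 (hf.mono hε hε1) h1) hf.2) ?_⟩
    · filter_upwards [key] with y hy using hy.2.comp y hy.1
    · filter_upwards [key] with y hy
      exact (fderiv_comp y hy.2 hy.1).symm

theorem HC.comp_smooth (hε : 0 < ε) (hε1 : ε ≤ 1) {m : ℕ} : ∀ {F G : Type} [NormedAddCommGroup F] [NormedSpace ℝ F]
    [NormedAddCommGroup G] [NormedSpace ℝ G] {g : F → G} {f : E → F} {x : E},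
    ContDiffAt ℝ (m+1 : ℕ) g (f x) → HC ε m f x → HC ε m (fun y => g (f y)) x := by
  induction m with
  | zero =>
    intro F G _ _ _ _ g f x hg hf
    obtain ⟨K, t, ht, hl⟩ := ContDiffAt.exists_lipschitzOnWith (f := g) (x := f x) (by exact_mod_cast hg)
    have cf : ContinuousAt f x := (hf.contDiffAt hε).continuousAt
    obtain ⟨C, r, hC, hr, h⟩ := hf
    obtain ⟨s, hs, h3⟩ := Metric.mem_nhds_iff.1 (cf.preimage_mem_nhds ht)
    refine ⟨K * C, min r s, by positivity, lt_min hr hs, fun y hy y' hy' => ?_⟩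
    have a := h y (ball_subset_ball (min_le_left _ _) hy) y' (ball_subset_ball (min_le_left _ _) hy')
    refine (hl.norm_sub_le (h3 (ball_subset_ball (min_le_right _ _) hy)) (h3 (ball_subset_ball (min_le_right _ _) hy'))).trans ?_
    rw [mul_assoc]
    gcongr
  | succ m ih =>
    intro F G _ _ _ _ g f x hg hf
    have cf : ContinuousAt f x := (hf.contDiffAt hε).continuousAt
    have hg1 : ∀ᶠ y in 𝓝 (f x), DifferentiableAt ℝ g y := by
      have := (hg.of_le (m := 1) (by norm_cast; omega)).eventually (by simp)
      filter_upwards [this] with y hy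
      exact hy.differentiableAt one_ne_zero
    have key : ∀ᶠ y in 𝓝 x, DifferentiableAt ℝ f y ∧ DifferentiableAt ℝ g (f y) :=
      hf.1.and (cf.eventually hg1)
    refine ⟨?_, HC.congr (HC.bilin hε hε1 (ContinuousLinearMap.compL ℝ E F G)
      (ih (hg.fderiv_right (m := ((m+1:ℕ) : WithTop ℕ∞)) (by norm_cast)) (hf.mono hε hε1)) hf.2) ?_⟩
    · filter_upwards [key] with y hy using hy.2.comp y hy.1
    · filter_upwards [key] with y hy
      exact (fderiv_comp y hy.2 hy.1).symm

theorem HC.inverse (hε : 0 < ε) (hε1 : ε ≤ 1) [CompleteSpace E] {m : ℕ} {f : E → F} {g : F → E} {b : F}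
    (e : E ≃L[ℝ] F) (hf : HC ε m f (g b)) (he : fderiv ℝ f (g b) = (e : E →L[ℝ] F))
    (hm : 1 ≤ m) (hg : ContDiffAt ℝ 1 g b) (hfg : ∀ᶠ y in 𝓝 b, f (g y) = y) : HC ε m g b := by
  have : ∀ j, j ≤ m → HC ε j g b := by
    intro j
    induction j with
    | zero => intro _; exact HC.of_contDiffAt hε1 (by exact_mod_cast hg)
    | succ j ih =>
      intro hj
      obtain ⟨m, rfl⟩ : ∃ m', m = m' + 1 := ⟨m - 1, by omega⟩
      have hgd : ∀ᶠ y in 𝓝 b, DifferentiableAt ℝ g y := by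
        filter_upwards [hg.eventually (by simp)] with y hy
        exact hy.differentiableAt one_ne_zero
      have h1 : HC ε j (fun y => fderiv ℝ f (g y)) b :=
        HC.comp hε hε1 (HC.mono_le hε hε1 (by omega) hf.2) (ih (by omega)) hg
      have h2 : HC ε j (fun y => ContinuousLinearMap.inverse (fderiv ℝ f (g y))) b := by
        refine HC.comp_smooth hε hε1 (g := ContinuousLinearMap.inverse) ?_ h1
        rw [he]; exact contDiffAt_map_inverse e
      have hev : ∀ᶠ y in 𝓝 b, fderiv ℝ f (g y) ∈ Set.range ((↑) : (E ≃L[ℝ] F) → E →L[ℝ] F) := by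
        have hc : ContinuousAt (fun y => fderiv ℝ f (g y)) b := (h1.contDiffAt hε).continuousAt
        exact hc.eventually (by beta_reduce; rw [he]; exact ContinuousLinearEquiv.nhds e)
      refine ⟨hgd, h2.congr ?_⟩
      filter_upwards [hgd, hev, hfg.eventually_nhds, hg.continuousAt.eventually hf.1] with y h1 h2 h3 h4
      obtain ⟨e', he'⟩ := h2
      have h5 : HasFDerivAt (fun y => f (g y)) ((fderiv ℝ f (g y)).comp (fderiv ℝ g y)) y :=
        h4.hasFDerivAt.comp y h1.hasFDerivAt
      have h6 : HasFDerivAt (fun y => f (g y)) (ContinuousLinearMap.id ℝ F) y :=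
        (hasFDerivAt_id y).congr_of_eventuallyEq h3
      have h7 := h5.unique h6
      rw [← he'] at h7 ⊢
      rw [ContinuousLinearMap.inverse_equiv]
      ext v
      have := congrArg (fun L => e'.symm (L v)) h7
      simpa using this.symm
  exact this m le_rfl

theorem HC.of_iterated {m : ℕ} : ∀ {F : Type} [NormedAddCommGroup F] [NormedSpace ℝ F] {f : E → F} {x : E},
    ContDiffAt ℝ m f x → (∃ C r : ℝ, 0 ≤ C ∧ 0 < r ∧ ∀ y ∈ ball x r, ∀ y' ∈ ball x r,
      ‖iteratedFDeriv ℝ m f y - iteratedFDeriv ℝ m f y'‖ ≤ C * ‖y - y'‖ ^ ε) → HC ε m f x := by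
  induction m with
  | zero =>
    intro F _ _ f x _ ⟨C, r, hC, hr, h⟩
    refine ⟨C, r, hC, hr, fun y hy y' hy' => ?_⟩
    have := h y hy y' hy'
    rw [iteratedFDeriv_zero_eq_comp] at this
    simp only [Function.comp] at this
    rwa [← map_sub, LinearIsometryEquiv.norm_map] at this
  | succ m ih =>
    intro F _ _ f x hf ⟨C, r, hC, hr, h⟩
    refine ⟨?_, ih (hf.fderiv_right (m := ((m:ℕ) : WithTop ℕ∞)) (by norm_cast)) ⟨C, r, hC, hr, fun y hy y' hy' => ?_⟩⟩
    · have := (hf.of_le (m := 1) (by norm_cast; omega)).eventually (by simp)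
      filter_upwards [this] with y hy
      exact hy.differentiableAt one_ne_zero
    · have := h y hy y' hy'
      rw [iteratedFDeriv_succ_eq_comp_right, iteratedFDeriv_succ_eq_comp_right] at this
      simp only [Function.comp] at this
      have e := (continuousMultilinearCurryRightEquiv' ℝ m E F).symm.dist_map
        (iteratedFDeriv ℝ m (fun y => fderiv ℝ f y) y) (iteratedFDeriv ℝ m (fun y => fderiv ℝ f y) y')
      rw [dist_eq_norm, dist_eq_norm] at e
      exact e.symm.le.trans this


end HCsec
end KL

namespace KL
open Filter Topology

section Taylor
variable {E : Type} [NormedAddCommGroup E] [NormedSpace ℝ E]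
variable {F : Type} [NormedAddCommGroup F] [NormedSpace ℝ F] {ε : ℝ}

theorem taylor_step {f : E → F} {x z h : E} {r B : ℝ} (hf : ∀ y ∈ ball x r, DifferentiableAt ℝ f y)
    (hz : z ∈ ball x r) (hzh : z + h ∈ ball x r) (P P' : ℝ → F) (hP : ∀ t, HasDerivAt P (P' t) t)
    (hP0 : P 0 = f z) (hB : ∀ t ∈ Icc (0:ℝ) 1, z + t • h ∈ ball x r → ‖fderiv ℝ f (z + t • h) h - P' t‖ ≤ B) :
    ‖f (z + h) - P 1‖ ≤ B := by
  have hseg : ∀ t ∈ Icc (0:ℝ) 1, z + t • h ∈ ball x r := by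
    intro t ht
    have := (convex_ball x r) hz hzh (sub_nonneg.2 ht.2) ht.1 (by ring)
    convert this using 1
    rw [sub_smul, smul_add, one_smul]; abel
  have key := norm_image_sub_le_of_norm_deriv_le_segment_01' (f := fun t : ℝ => f (z + t • h) - P t)
    (f' := fun t => fderiv ℝ f (z + t • h) h - P' t) (C := B) ?_ ?_
  · simpa [hP0] using key
  · intro t ht
    refine HasDerivAt.hasDerivWithinAt ?_
    refine HasDerivAt.sub ?_ (hP t)
    have h1 : HasDerivAt (fun t : ℝ => z + t • h) h t := by
      simpa using ((hasDerivAt_id t).smul_const h).const_add z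
    exact (hf _ (hseg t ht)).hasFDerivAt.comp_hasDerivAt t h1
  · intro t ht
    exact hB t (Ico_subset_Icc_self ht) (hseg t (Ico_subset_Icc_self ht))

theorem rpow_aux {a : ℝ} (ha : 0 ≤ a) {h : E} {t : ℝ} (ht : t ∈ Icc (0:ℝ) 1) : ‖t • h‖ ^ a ≤ ‖h‖ ^ a := by
  refine Real.rpow_le_rpow (norm_nonneg _) ?_ ha
  rw [norm_smul, Real.norm_of_nonneg ht.1]
  exact mul_le_of_le_one_left (norm_nonneg _) ht.2

theorem rpow_aux2 {a : ℝ} (ha : 0 ≤ a) (h : E) : ‖h‖ ^ a * ‖h‖ = ‖h‖ ^ (a + 1) := by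
  rw [Real.rpow_add_of_nonneg (norm_nonneg _) ha zero_le_one, Real.rpow_one]

theorem taylor1 (hε : 0 < ε) {f : E → F} {x : E} (hf : HC ε 1 f x) : ∃ C r : ℝ, 0 ≤ C ∧ 0 < r ∧
    ∀ z h, z ∈ ball x r → z + h ∈ ball x r →
    ‖f (z + h) - (f z + fderiv ℝ f z h)‖ ≤ C * ‖h‖ ^ (ε + 1) := by
  obtain ⟨C, r, hC, hr, hH⟩ := hf.2
  obtain ⟨s, hs, hd⟩ := Metric.eventually_nhds_iff_ball.1 hf.1
  refine ⟨C, min s r, hC, lt_min hs hr, fun z h hz hzh => ?_⟩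
  have := taylor_step (f := f) (fun y hy => hd y (ball_subset_ball (min_le_left _ _) hy)) hz hzh
    (fun t => f z + t • fderiv ℝ f z h) (fun t => fderiv ℝ f z h) ?_ (by simp) (B := C * ‖h‖ ^ (ε + 1)) ?_
  · simpa using this
  · intro t
    simpa using ((hasDerivAt_id t).smul_const (fderiv ℝ f z h)).const_add (f z)
  · intro t ht h1
    have := hH _ (ball_subset_ball (min_le_right _ _) h1) _ (ball_subset_ball (min_le_right _ _) hz)
    rw [add_sub_cancel_left] at this
    rw [← ContinuousLinearMap.sub_apply, ← rpow_aux2 hε.le, ← mul_assoc]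
    refine (ContinuousLinearMap.le_opNorm _ _).trans ?_
    gcongr
    exact this.trans (mul_le_mul_of_nonneg_left (rpow_aux hε.le ht) hC)

theorem taylor2 (hε : 0 < ε) {f : E → F} {x : E} (hf : HC ε 2 f x) : ∃ C r : ℝ, 0 ≤ C ∧ 0 < r ∧
    ∀ z h, z ∈ ball x r → z + h ∈ ball x r →
    ‖f (z + h) - (f z + fderiv ℝ f z h + (1/2 : ℝ) • fderiv ℝ (fderiv ℝ f) z h h)‖ ≤ C * ‖h‖ ^ (ε + 2) := by
  obtain ⟨C, r, hC, hr, hH⟩ := taylor1 hε hf.2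
  obtain ⟨s, hs, hd⟩ := Metric.eventually_nhds_iff_ball.1 hf.1
  refine ⟨C, min s r, hC, lt_min hs hr, fun z h hz hzh => ?_⟩
  have := taylor_step (f := f) (fun y hy => hd y (ball_subset_ball (min_le_left _ _) hy)) hz hzh
    (fun t => f z + t • fderiv ℝ f z h + (t ^ 2 / 2) • fderiv ℝ (fderiv ℝ f) z h h)
    (fun t => fderiv ℝ f z h + t • fderiv ℝ (fderiv ℝ f) z h h) ?_ (by simp) (B := C * ‖h‖ ^ (ε + 2)) ?_
  · simpa using this
  · intro t
    have h1 := ((hasDerivAt_id t).smul_const (fderiv ℝ f z h)).const_add (f z)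
    have h2 : HasDerivAt (fun t : ℝ => t ^ 2 / 2) t t := by
      have := (hasDerivAt_pow 2 t).div_const 2
      simpa using this
    have h5 := h1.add (h2.smul_const (fderiv ℝ (fderiv ℝ f) z h h))
    rw [one_smul] at h5
    exact h5
  · intro t ht h1
    have := hH z (t • h) (ball_subset_ball (min_le_right _ _) hz) (ball_subset_ball (min_le_right _ _) h1)
    have e : fderiv ℝ f (z + t • h) h - (fderiv ℝ f z h + t • fderiv ℝ (fderiv ℝ f) z h h) =
      (fderiv ℝ f (z + t • h) - (fderiv ℝ f z + fderiv ℝ (fderiv ℝ f) z (t • h))) h := by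
      simp
    rw [e, show ε + 2 = ε + 1 + 1 by ring, ← rpow_aux2 (by positivity), ← mul_assoc]
    refine (ContinuousLinearMap.le_opNorm _ _).trans ?_
    gcongr
    exact this.trans (mul_le_mul_of_nonneg_left (rpow_aux (by positivity) ht) hC)

theorem taylor3 (hε : 0 < ε) {f : E → F} {x : E} (hf : HC ε 3 f x) : ∃ C r : ℝ, 0 ≤ C ∧ 0 < r ∧
    ∀ z h, z ∈ ball x r → z + h ∈ ball x r →
    ‖f (z + h) - (f z + fderiv ℝ f z h + (1/2 : ℝ) • fderiv ℝ (fderiv ℝ f) z h h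
      + (1/6 : ℝ) • fderiv ℝ (fderiv ℝ (fderiv ℝ f)) z h h h)‖ ≤ C * ‖h‖ ^ (ε + 3) := by
  obtain ⟨C, r, hC, hr, hH⟩ := taylor2 hε hf.2
  obtain ⟨s, hs, hd⟩ := Metric.eventually_nhds_iff_ball.1 hf.1
  refine ⟨C, min s r, hC, lt_min hs hr, fun z h hz hzh => ?_⟩
  have := taylor_step (f := f) (fun y hy => hd y (ball_subset_ball (min_le_left _ _) hy)) hz hzh
    (fun t => f z + t • fderiv ℝ f z h + (t ^ 2 / 2) • fderiv ℝ (fderiv ℝ f) z h h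
      + (t ^ 3 / 6) • fderiv ℝ (fderiv ℝ (fderiv ℝ f)) z h h h)
    (fun t => fderiv ℝ f z h + t • fderiv ℝ (fderiv ℝ f) z h h
      + (t ^ 2 / 2) • fderiv ℝ (fderiv ℝ (fderiv ℝ f)) z h h h) ?_ (by simp) (B := C * ‖h‖ ^ (ε + 3)) ?_
  · simpa using this
  · intro t
    have h1 := ((hasDerivAt_id t).smul_const (fderiv ℝ f z h)).const_add (f z)
    have h2 : HasDerivAt (fun t : ℝ => t ^ 2 / 2) t t := by
      have := (hasDerivAt_pow 2 t).div_const 2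
      simpa using this
    have h3 : HasDerivAt (fun t : ℝ => t ^ 3 / 6) (t ^ 2 / 2) t := by
      have := (hasDerivAt_pow 3 t).div_const 6
      refine this.congr_deriv ?_
      show ((3 : ℕ) : ℝ) * t ^ 2 / 6 = t ^ 2 / 2
      push_cast
      ring
    have h5 := (h1.add (h2.smul_const (fderiv ℝ (fderiv ℝ f) z h h))).add
      (h3.smul_const (fderiv ℝ (fderiv ℝ (fderiv ℝ f)) z h h h))
    rw [one_smul] at h5
    exact h5
  · intro t ht h1
    have := hH z (t • h) (ball_subset_ball (min_le_right _ _) hz) (ball_subset_ball (min_le_right _ _) h1)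
    have e : fderiv ℝ f (z + t • h) h - (fderiv ℝ f z h + t • fderiv ℝ (fderiv ℝ f) z h h
      + (t ^ 2 / 2) • fderiv ℝ (fderiv ℝ (fderiv ℝ f)) z h h h) =
      (fderiv ℝ f (z + t • h) - (fderiv ℝ f z + fderiv ℝ (fderiv ℝ f) z (t • h)
        + (1/2 : ℝ) • fderiv ℝ (fderiv ℝ (fderiv ℝ f)) z (t • h) (t • h))) h := by
      simp [smul_smul]
      congr 2
      ring
    rw [e, show ε + 3 = ε + 2 + 1 by ring, ← rpow_aux2 (by positivity), ← mul_assoc]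
    refine (ContinuousLinearMap.le_opNorm _ _).trans ?_
    gcongr
    exact this.trans (mul_le_mul_of_nonneg_left (rpow_aux (by positivity) ht) hC)

end Taylor
end KL

namespace KL
open Filter Topology

section SD
variable {E : Type} [NormedAddCommGroup E] [InnerProductSpace ℝ E] [FiniteDimensional ℝ E] {ε : ℝ}

/-- the gradient -/
def grd (ρ : E → ℝ) (y : E) : E := (InnerProductSpace.toDual ℝ E).symm (fderiv ℝ ρ y)

/-- the inner unit normal -/
def nrm (ρ : E → ℝ) (y : E) : E := -(‖grd ρ y‖⁻¹ • grd ρ y)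

/-- the Riesz map as a real linear map -/
def rsz : (E →L[ℝ] ℝ) →L[ℝ] E := LinearMap.toContinuousLinearMap
  { toFun := fun l => (InnerProductSpace.toDual ℝ E).symm l
    map_add' := fun a b => map_add _ a b
    map_smul' := fun a b => by simp }

theorem inner_grd (ρ : E → ℝ) (y v : E) : inner ℝ (grd ρ y) v = fderiv ℝ ρ y v :=
  InnerProductSpace.toDual_symm_apply

theorem norm_grd (ρ : E → ℝ) (y : E) : ‖grd ρ y‖ = ‖fderiv ℝ ρ y‖ := by
  simp [grd]

theorem inner_nrm (ρ : E → ℝ) (y v : E) :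
    inner ℝ (nrm ρ y) v = -‖fderiv ℝ ρ y‖⁻¹ * fderiv ℝ ρ y v := by
  rw [nrm, inner_neg_left, real_inner_smul_left, inner_grd, norm_grd, neg_mul]

theorem norm_nrm (ρ : E → ℝ) {y : E} (h : fderiv ℝ ρ y ≠ 0) : ‖nrm ρ y‖ = 1 := by
  have : ‖grd ρ y‖ ≠ 0 := by rw [norm_grd]; simpa using h
  rw [nrm, norm_neg, norm_smul, norm_inv, norm_norm, inv_mul_cancel₀ this]

theorem fderiv_nrm (ρ : E → ℝ) {y : E} (h : fderiv ℝ ρ y ≠ 0) :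
    fderiv ℝ ρ y (nrm ρ y) = -‖fderiv ℝ ρ y‖ := by
  have h2 := inner_nrm ρ y (nrm ρ y)
  rw [real_inner_self_eq_norm_sq, norm_nrm ρ h] at h2
  have : ‖fderiv ℝ ρ y‖ ≠ 0 := by simpa using h
  field_simp at h2
  linarith

theorem HC.nrm' (hε : 0 < ε) (hε1 : ε ≤ 1) {m : ℕ} {ρ : E → ℝ} {p : E}
    (hρ : HC ε (m+1) ρ p) (hd : fderiv ℝ ρ p ≠ 0) : HC ε m (nrm ρ) p := by
  have h1 : HC ε m (grd ρ) p :=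
    HC.clm (rsz (E := E)) hρ.2
  have h2 : ContDiffAt ℝ ((m+1 : ℕ)) (fun v : E => -(‖v‖⁻¹ • v)) (grd ρ p) := by
    have h3 : grd ρ p ≠ 0 := by
      rw [← norm_ne_zero_iff, norm_grd]; simpa using hd
    exact (((contDiffAt_norm ℝ h3).inv (by simpa using h3)).smul contDiffAt_id).neg
  exact HC.comp_smooth hε hε1 (g := fun v : E => -(‖v‖⁻¹ • v)) (f := grd ρ) h2 h1

theorem tub_equiv (l : E →L[ℝ] ℝ) (N : E) (hN : l N ≠ 0) :
    ∃ e : (E × ℝ) ≃L[ℝ] (E × ℝ), ∀ v s, e (v, s) = (v + s • N, l v) := by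
  let f₁ : (E × ℝ) →L[ℝ] (E × ℝ) :=
    (ContinuousLinearMap.fst ℝ E ℝ + (ContinuousLinearMap.snd ℝ E ℝ).smulRight N).prod
      (l.comp (ContinuousLinearMap.fst ℝ E ℝ))
  let sg : (E × ℝ) →L[ℝ] ℝ := (l N)⁻¹ • (l.comp (ContinuousLinearMap.fst ℝ E ℝ) - ContinuousLinearMap.snd ℝ E ℝ)
  let f₂ : (E × ℝ) →L[ℝ] (E × ℝ) :=
    (ContinuousLinearMap.fst ℝ E ℝ - sg.smulRight N).prod sg
  refine ⟨ContinuousLinearEquiv.equivOfInverse f₁ f₂ ?_ ?_, fun v s => ?_⟩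
  · rintro ⟨v, s⟩
    have : (l N)⁻¹ * (s * l N) = s := by field_simp
    simp [f₁, f₂, sg, this]
  · rintro ⟨v, s⟩
    have : l v - (l N)⁻¹ * (l v - s) * l N = s := by field_simp; ring
    simp [f₁, f₂, sg, this]
  · simp [f₁]

theorem tub (hε : 0 < ε) (hε1 : ε ≤ 1) {m : ℕ} (hm : 1 ≤ m) {ρ : E → ℝ} {p : E}
    (hρ : HC ε (m+1) ρ p) (h0 : ρ p = 0) (hd : fderiv ℝ ρ p ≠ 0) :
    ∃ (π : E → E) (d : E → ℝ), HC ε m π p ∧ HC ε m d p ∧ π p = p ∧ d p = 0 ∧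
      (∀ᶠ x in 𝓝 p, π x + d x • nrm ρ (π x) = x ∧ ρ (π x) = 0) ∧
      ∃ r > 0, ∀ q t, q ∈ ball p r → |t| < r → ρ q = 0 → d (q + t • nrm ρ q) = t := by
  have hN := HC.nrm' hε hε1 hρ hd
  have hNd : ContDiffAt ℝ 1 (nrm ρ) p := (hN.contDiffAt hε).of_le (by exact_mod_cast hm)
  have hρd : ContDiffAt ℝ 1 ρ p := (hρ.contDiffAt hε).of_le (by norm_cast; omega)
  let F : E × ℝ → E × ℝ := fun y => (y.1 + y.2 • nrm ρ y.1, ρ y.1)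
  have hfst : HC ε m (fun y : E × ℝ => y.1) (p, (0:ℝ)) := HC.of_contDiffAt hε1 contDiffAt_fst
  have hsnd : HC ε m (fun y : E × ℝ => y.2) (p, (0:ℝ)) := HC.of_contDiffAt hε1 contDiffAt_snd
  have hF : HC ε m F (p, (0:ℝ)) := by
    have h1 : HC ε m (fun y : E × ℝ => nrm ρ y.1) (p, (0:ℝ)) :=
      HC.comp hε hε1 (f := fun y : E × ℝ => y.1) hN hfst contDiffAt_fst
    have h2 : HC ε m (fun y : E × ℝ => ρ y.1) (p, (0:ℝ)) :=
      HC.comp hε hε1 (f := fun y : E × ℝ => y.1) (hρ.mono hε hε1) hfst contDiffAt_fst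
    exact (hfst.add (HC.bilin hε hε1 (ContinuousLinearMap.lsmul ℝ ℝ) hsnd h1)).prodMk h2
  have hFp : F (p, 0) = (p, 0) := by simp [F, h0]
  obtain ⟨e, he⟩ := tub_equiv (fderiv ℝ ρ p) (nrm ρ p) (by rw [fderiv_nrm ρ hd]; simpa using hd)
  have hF1 : ContDiffAt ℝ 1 F (p, 0) := (hF.contDiffAt hε).of_le (by exact_mod_cast hm)
  have hFe : HasFDerivAt F (e : (E × ℝ) →L[ℝ] (E × ℝ)) (p, 0) := by
    have a1 : HasFDerivAt (fun y : E × ℝ => nrm ρ y.1) _ (p, (0:ℝ)) :=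
      HasFDerivAt.comp (p, (0:ℝ)) (f := fun y : E × ℝ => y.1)
        (hNd.differentiableAt (by norm_num)).hasFDerivAt hasFDerivAt_fst
    have a2 : HasFDerivAt (fun y : E × ℝ => ρ y.1) _ (p, (0:ℝ)) :=
      HasFDerivAt.comp (p, (0:ℝ)) (f := fun y : E × ℝ => y.1)
        (hρd.differentiableAt (by norm_num)).hasFDerivAt hasFDerivAt_fst
    have a3 := ((hasFDerivAt_fst (𝕜 := ℝ) (p := (p, (0:ℝ)))).add
      ((hasFDerivAt_snd (𝕜 := ℝ) (p := (p, (0:ℝ)))).smul a1)).prodMk a2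
    refine HasFDerivAt.congr_fderiv a3 ?_
    ext v <;> simp [he]
  let G := hF1.localInverse hFe one_ne_zero
  have hGF : ∀ᶠ x in 𝓝 (p, (0:ℝ)), G (F x) = x :=
    (hF1.hasStrictFDerivAt' hFe one_ne_zero).eventually_left_inverse
  have hFG : ∀ᶠ x in 𝓝 (p, (0:ℝ)), F (G x) = x := by
    have := (hF1.hasStrictFDerivAt' hFe one_ne_zero).eventually_right_inverse
    rw [hFp] at this
    exact this
  have hGp : G (p, 0) = (p, 0) := by
    have := hGF.self_of_nhds
    rwa [hFp] at this
  have hG1 : ContDiffAt ℝ 1 G (p, 0) := by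
    have := hF1.to_localInverse hFe one_ne_zero
    rwa [hFp] at this
  have hGHC : HC ε m G (p, 0) :=
    HC.inverse hε hε1 e (by rw [hGp]; exact hF) (by rw [hGp]; exact hFe.fderiv) hm hG1 hFG
  have hi : HC ε m (fun x : E => (x, (0:ℝ))) p :=
    HC.of_contDiffAt hε1 (contDiffAt_id.prodMk contDiffAt_const)
  have hGi : HC ε m (fun x : E => G (x, (0:ℝ))) p :=
    HC.comp hε hε1 (f := fun x : E => (x, (0:ℝ))) hGHC hi (contDiffAt_id.prodMk contDiffAt_const)
  refine ⟨fun x => (G (x, 0)).1, fun x => (G (x, 0)).2, HC.clm (ContinuousLinearMap.fst ℝ E ℝ) hGi,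
    HC.clm (ContinuousLinearMap.snd ℝ E ℝ) hGi, by simp [hGp], by simp [hGp], ?_, ?_⟩
  · have ht : Tendsto (fun x : E => (x, (0:ℝ))) (𝓝 p) (𝓝 (p, 0)) :=
      (continuous_id.prodMk continuous_const).continuousAt
    filter_upwards [ht.eventually hFG] with x hx
    exact ⟨congrArg Prod.fst hx, congrArg Prod.snd hx⟩
  · obtain ⟨r, hr, h⟩ := Metric.eventually_nhds_iff_ball.1 hGF
    refine ⟨r, hr, fun q t hq ht hρq => ?_⟩
    have := h (q, t) (by
      rw [mem_ball, Prod.dist_eq, max_lt_iff]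
      exact ⟨hq, by simpa [Real.dist_eq] using ht⟩)
    simp only [F, hρq] at this
    show (G (q + t • nrm ρ q, 0)).2 = t
    rw [this]

theorem signed_dist (hε : 0 < ε) (hε1 : ε ≤ 1) {m : ℕ} (hm : 1 ≤ m) {ρ : E → ℝ} {p : E}
    (hρ : HC ε (m+1) ρ p) (h0 : ρ p = 0) (hd : fderiv ℝ ρ p ≠ 0) :
    ∃ d : E → ℝ, HC ε (m+1) d p ∧ d p = 0 ∧ fderiv ℝ d p = -‖fderiv ℝ ρ p‖⁻¹ • fderiv ℝ ρ p ∧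
      (∀ X, fderiv ℝ ρ p X = 0 → fderiv ℝ (fderiv ℝ d) p X X =
        -‖fderiv ℝ ρ p‖⁻¹ * fderiv ℝ (fderiv ℝ ρ) p X X) ∧
      ∃ r > 0, ∀ q t, q ∈ ball p r → |t| < r → ρ q = 0 → d (q + t • nrm ρ q) = t := by
  obtain ⟨π, d, hπ, hdd, hπp, hdp, hev, hr⟩ := tub hε hε1 hm hρ h0 hd
  have hN := HC.nrm' hε hε1 hρ hd
  have hNd : ContDiffAt ℝ 1 (nrm ρ) p := (hN.contDiffAt hε).of_le (by exact_mod_cast hm)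
  have hρd : ContDiffAt ℝ 2 ρ p := (hρ.contDiffAt hε).of_le (by norm_cast; omega)
  have hπd : ContDiffAt ℝ 1 π p := (hπ.contDiffAt hε).of_le (by exact_mod_cast hm)
  have hdd1 : ContDiffAt ℝ 1 d p := (hdd.contDiffAt hε).of_le (by exact_mod_cast hm)
  have ev1 : ∀ {H : Type} [NormedAddCommGroup H] [NormedSpace ℝ H] {f : E → H}, ContDiffAt ℝ 1 f p →
      ∀ᶠ x in 𝓝 p, DifferentiableAt ℝ f x := by
    intro H _ _ f hf
    filter_upwards [hf.eventually (by simp)] with x hx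
    exact hx.differentiableAt (by norm_num)
  have htπ : Tendsto π (𝓝 p) (𝓝 p) := by
    have := hπd.continuousAt.tendsto
    rwa [hπp] at this
  have hne : ∀ᶠ y in 𝓝 p, fderiv ℝ ρ y ≠ 0 := by
    have : ContinuousAt (fderiv ℝ ρ) p := (hρ.2.contDiffAt hε).continuousAt
    exact this.eventually_ne hd
  have key : ∀ᶠ x in 𝓝 p, fderiv ℝ d x = innerSL ℝ (nrm ρ (π x)) ∧
      ∀ v, fderiv ℝ π x v + (fderiv ℝ d x v) • nrm ρ (π x) +
        d x • (fderiv ℝ (nrm ρ) (π x) (fderiv ℝ π x v)) = v := by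
    filter_upwards [ev1 hπd, ev1 hdd1, htπ.eventually (ev1 hNd), htπ.eventually (ev1 (hρd.of_le (by norm_num))), hev.eventually_nhds,
      htπ.eventually hne.eventually_nhds] with x b1 b2 b3 b4 b5 b6
    have c1 := b1.hasFDerivAt
    have c2 := b2.hasFDerivAt
    have c3 := b3.hasFDerivAt.comp x c1
    have c4 := b4.hasFDerivAt.comp x c1
    have c5 := c1.add (c2.smul c3)
    have c6 := c5.unique ((hasFDerivAt_id x).congr_of_eventuallyEq (b5.mono fun y hy => hy.1))
    have c7 := c4.unique ((hasFDerivAt_const (0:ℝ) x).congr_of_eventuallyEq (b5.mono fun y hy => hy.2))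
    have c8 : ∀ w, inner ℝ (nrm ρ (π x)) (fderiv ℝ (nrm ρ) (π x) w) = 0 := by
      intro w
      have e1 := b3.hasFDerivAt.inner ℝ b3.hasFDerivAt
      have e2 := e1.unique ((hasFDerivAt_const (1:ℝ) (π x)).congr_of_eventuallyEq (b6.mono fun y hy => by
        show inner ℝ (nrm ρ y) (nrm ρ y) = 1
        rw [real_inner_self_eq_norm_sq, norm_nrm ρ hy]; norm_num))
      have e3 := DFunLike.congr_fun e2 w
      simp [real_inner_comm] at e3
      exact e3
    have c9 : ∀ v, fderiv ℝ π x v + (fderiv ℝ d x v) • nrm ρ (π x) +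
        d x • (fderiv ℝ (nrm ρ) (π x) (fderiv ℝ π x v)) = v := by
      intro v
      have := DFunLike.congr_fun c6 v
      simp at this
      rw [← this]
      simp only [this]
      rw [add_assoc, add_comm (fderiv ℝ d x v • nrm ρ (π x))]
      exact this
    refine ⟨?_, c9⟩
    ext v
    have f1 := congrArg (fun u => inner ℝ (nrm ρ (π x)) u) (c9 v)
    have f2 : fderiv ℝ ρ (π x) (fderiv ℝ π x v) = 0 := by
      simpa using DFunLike.congr_fun c7 v
    have f3 : inner ℝ (nrm ρ (π x)) (fderiv ℝ π x v) = 0 := by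
      rw [inner_nrm, f2, mul_zero]
    simp only [inner_add_right, real_inner_smul_right, f3, c8, real_inner_self_eq_norm_sq,
      norm_nrm ρ b6.self_of_nhds] at f1
    rw [innerSL_apply_apply, ← f1]
    ring
  have hNπ : HC ε m (fun x => nrm ρ (π x)) p := HC.comp hε hε1 (by rw [hπp]; exact hN) hπ hπd
  have hdd' : HC ε (m+1) d p := by
    refine ⟨ev1 hdd1, ?_⟩
    exact (HC.clm (innerSL ℝ : E →L[ℝ] E →L[ℝ] ℝ) hNπ).congr (key.mono fun x hx => hx.1.symm)
  have hk0 := key.self_of_nhds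
  rw [hπp, hdp] at hk0
  refine ⟨d, hdd', hdp, ?_, ?_, hr⟩
  · ext v
    rw [hk0.1, innerSL_apply_apply, inner_nrm]
    simp
  · intro X hX
    have g1 : fderiv ℝ π p X = X := by
      have := hk0.2 X
      rw [hk0.1, innerSL_apply_apply, inner_nrm, hX] at this
      simpa using this
    have g2 : fderiv ℝ (fderiv ℝ d) p X X = fderiv ℝ (fun x => -‖grd ρ (π x)‖⁻¹ * fderiv ℝ ρ (π x) X) p X := by
      have : DifferentiableAt ℝ (fderiv ℝ d) p := (hdd'.2.contDiffAt hε).differentiableAt (by norm_cast; omega)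
      have h1 := (this.hasFDerivAt.clm_apply (hasFDerivAt_const X p)).fderiv
      have h2 : (fun x => fderiv ℝ d x X) =ᶠ[𝓝 p] (fun x => -‖grd ρ (π x)‖⁻¹ * fderiv ℝ ρ (π x) X) := by
        filter_upwards [key] with x hx
        rw [hx.1, innerSL_apply_apply, inner_nrm, norm_grd]
      rw [← h2.fderiv_eq, h1]
      simp
    have hgrd : DifferentiableAt ℝ (grd ρ) p := by
      have h1 : HC ε m (grd ρ) p :=
        HC.clm (rsz (E := E)) hρ.2
      exact (h1.contDiffAt hε).differentiableAt (by norm_cast; omega)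
    have hg0 : grd ρ p ≠ 0 := by
      rw [← norm_ne_zero_iff, norm_grd]; simpa using hd
    have hc : DifferentiableAt ℝ (fun y => -‖grd ρ y‖⁻¹) p :=
      ((hgrd.norm ℝ hg0).inv (by simpa using hg0)).neg
    have hD2 : DifferentiableAt ℝ (fderiv ℝ ρ) p := (hρ.2.contDiffAt hε).differentiableAt (by norm_cast; omega)
    have g3 := hc.hasFDerivAt.mul (hD2.hasFDerivAt.clm_apply (hasFDerivAt_const X p))
    rw [← hπp] at g3
    have g4 := (g3.comp p (hπd.differentiableAt (by norm_num)).hasFDerivAt).fderiv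
    rw [g2]
    have g5 := DFunLike.congr_fun g4 X
    rw [hπp] at g5
    simp [g1, hX, norm_grd] at g5
    rw [neg_mul, ← g5]
    simp only [norm_grd]
    rfl

end SD
end KL

namespace KL
open Filter Topology

section SD2
variable {E : Type} [NormedAddCommGroup E] [InnerProductSpace ℝ E] [FiniteDimensional ℝ E]

theorem foot_point {ρ : E → ℝ} {q z : E} (hρ : ContDiffAt ℝ 1 ρ q) (hd : fderiv ℝ ρ q ≠ 0)
    (hmin : IsLocalMinOn (fun y => ‖y - z‖ ^ 2) {y | ρ y = ρ q} q) :
    ∃ t : ℝ, z = q + t • nrm ρ q ∧ |t| = dist z q := by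
  have h1 : HasStrictFDerivAt (fun y => ‖y - z‖ ^ 2) (2 • (innerSL ℝ) (q - z)) q := by
    have := (hasStrictFDerivAt_norm_sq (q - z)).comp q ((hasStrictFDerivAt_id q).sub_const z)
    exact this
  obtain ⟨a, b, hab, h⟩ := IsLocalExtrOn.exists_multipliers_of_hasStrictFDerivAt_1d
    (Or.inl hmin) (hρ.hasStrictFDerivAt (by norm_num)) h1
  have hb : b ≠ 0 := by
    rintro rfl
    have ha : a ≠ 0 := by simpa using hab
    simp [ha] at h
    exact hd h
  have hg0 : ‖grd ρ q‖ ≠ 0 := by rw [norm_grd]; simpa using hd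
  have h2 : a • grd ρ q + (2 * b) • (q - z) = 0 := by
    refine ext_inner_right ℝ fun v => ?_
    have := DFunLike.congr_fun h v
    simp at this
    rw [inner_add_left, real_inner_smul_left, real_inner_smul_left, inner_grd, inner_zero_left, inner_sub_left]
    linarith
  have h3 : z = q + (-(a / (2 * b)) * ‖grd ρ q‖) • nrm ρ q := by
    have e1 : (2 * b)⁻¹ • (a • grd ρ q + (2 * b) • (q - z)) = 0 := by rw [h2, smul_zero]
    have e2 : (2 * b)⁻¹ * (2 * b) = 1 := by field_simp
    rw [smul_add, smul_smul, smul_smul, e2, one_smul] at e1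
    have e3 : z = q + ((2 * b)⁻¹ * a) • grd ρ q := by
      have : ((2 * b)⁻¹ * a) • grd ρ q + q - z = 0 := by rw [← e1]; abel
      rw [sub_eq_zero] at this
      rw [← this, add_comm]
    rw [nrm, smul_neg, smul_smul, ← neg_smul]
    rw [show -(-(a / (2 * b)) * ‖grd ρ q‖ * ‖grd ρ q‖⁻¹) = (2 * b)⁻¹ * a by field_simp]
    exact e3
  refine ⟨_, h3, ?_⟩
  rw [dist_eq_norm]
  conv_rhs => rw [h3]
  rw [add_sub_cancel_left, norm_smul, norm_nrm ρ hd, mul_one, Real.norm_eq_abs]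

theorem rho_zero {ρ : E → ℝ} {Ω W : Set E} (hΩ : IsOpen Ω) 
    (hW : IsOpen W) (hΩW : Ω ∩ W = {z ∈ W | ρ z < 0})
    (hρ1 : ∀ q ∈ W, ContDiffAt ℝ 1 ρ q) : ∀ q ∈ W, q ∈ frontier Ω → ρ q = 0 := by
  have hmem : ∀ z ∈ W, (z ∈ Ω ↔ ρ z < 0) := fun z hz => by
    have := Set.ext_iff.1 hΩW z
    simp [hz] at this
    exact this
  intro q hq hqf
  rw [hΩ.frontier_eq] at hqf
  refine le_antisymm ?_ (not_lt.1 fun h => hqf.2 ((hmem q hq).2 h))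
  by_contra! hlt
  have h1 : ∀ᶠ y in 𝓝 q, 0 < ρ y ∧ y ∈ W :=
    ((hρ1 q hq).continuousAt.eventually (lt_mem_nhds hlt)).and (hW.mem_nhds hq)
  obtain ⟨y, hy, hyΩ⟩ := mem_closure_iff_nhds.1 hqf.1 _ h1
  exact lt_asymm hy.1 ((hmem y hy.2).1 hyΩ)

theorem bd_eq {ρ d : E → ℝ} {p : E} {Ω W : Set E} (hΩ : IsOpen Ω) (hp : p ∈ frontier Ω)
    (hW : IsOpen W) (hpW : p ∈ W) (hΩW : Ω ∩ W = {z ∈ W | ρ z < 0})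
    (hρ : ContDiffOn ℝ 1 ρ W) (hd : fderiv ℝ ρ p ≠ 0)
    (hdd : ∃ r > 0, ∀ q t, q ∈ ball p r → |t| < r → ρ q = 0 → d (q + t • nrm ρ q) = t) :
    ∀ᶠ z in 𝓝 p, z ∈ Ω → infDist z (frontier Ω) = d z ∧ 0 < d z := by
  have hρ1 : ∀ q ∈ W, ContDiffAt ℝ 1 ρ q := fun q hq => hρ.contDiffAt (hW.mem_nhds hq)
  have hmem : ∀ z ∈ W, (z ∈ Ω ↔ ρ z < 0) := fun z hz => by
    have := Set.ext_iff.1 hΩW z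
    simp [hz] at this
    exact this
  have hfr := rho_zero hΩ hW hΩW hρ1
  have hfr2 : ∀ q ∈ W, fderiv ℝ ρ q ≠ 0 → ρ q = 0 → q ∈ frontier Ω := by
    intro q hq hdq h0
    rw [hΩ.frontier_eq]
    refine ⟨?_, fun h => by have := (hmem q hq).1 h; linarith⟩
    by_contra hcl
    apply hdq
    apply IsLocalMin.fderiv_eq_zero
    have h1 : ∀ᶠ y in 𝓝 q, y ∉ closure Ω := (isClosed_closure.isOpen_compl).mem_nhds hcl
    filter_upwards [h1, hW.mem_nhds hq] with y hy hyW
    rw [h0]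
    by_contra! h
    exact hy (subset_closure ((hmem y hyW).2 h))
  obtain ⟨r, hr, hdd⟩ := hdd
  have hρs : HasStrictFDerivAt ρ (fderiv ℝ ρ p) p := (hρ1 p hpW).hasStrictFDerivAt (by norm_num)
  set l := fderiv ℝ ρ p with hl
  have hl0 : 0 < ‖l‖ := norm_pos_iff.2 hd
  have hfc : ContinuousAt (fderiv ℝ ρ) p :=
    (hρ.continuousOn_fderiv_of_isOpen hW (by norm_num)).continuousAt (hW.mem_nhds hpW)
  have hNc : ContinuousAt (nrm ρ) p := by
    have h1 : ContinuousAt (grd ρ) p := (rsz (E := E)).continuous.continuousAt.comp hfc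
    have h2 : ‖grd ρ p‖ ≠ 0 := by rw [norm_grd]; simpa using hd
    exact ((h1.norm.inv₀ h2).smul h1).neg
  have hN : ∀ᶠ q in 𝓝 p, l (nrm ρ q) < -(‖l‖ / 2) := by
    have h1 : ContinuousAt (fun q => l (nrm ρ q)) p := l.continuous.continuousAt.comp hNc
    refine h1.eventually (gt_mem_nhds ?_)
    show fderiv ℝ ρ p (nrm ρ p) < _
    rw [fderiv_nrm ρ hd]
    show -‖l‖ < _
    linarith
  obtain ⟨r1, hr1, H1⟩ := Metric.eventually_nhds_iff_ball.1
    ((hW.eventually_mem hpW).and ((hfc.eventually_ne hd).and hN))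
  obtain ⟨r2, hr2, H2⟩ := Metric.eventually_nhds_iff_ball.1 (hρs.isLittleO.def (c := ‖l‖ / 2) (by positivity))
  set s := min r (min r1 r2) with hs
  have hs0 : 0 < s := lt_min hr (lt_min hr1 hr2)
  filter_upwards [ball_mem_nhds p (half_pos hs0)] with z hz hzΩ
  obtain ⟨q, hqf, hq⟩ := isClosed_frontier.exists_infDist_eq_dist ⟨p, hp⟩ z
  have hzq : dist z q < s / 2 := by
    rw [← hq]; exact (infDist_le_dist_of_mem hp).trans_lt hz
  have hqp : dist q p < s := by
    have := dist_triangle q z p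
    rw [dist_comm q z] at this
    rw [mem_ball] at hz
    linarith
  have hzp : dist z p < s := by rw [mem_ball] at hz; linarith
  have hsr : s ≤ r := min_le_left _ _
  have hsr1 : s ≤ r1 := (min_le_right _ _).trans (min_le_left _ _)
  have hsr2 : s ≤ r2 := (min_le_right _ _).trans (min_le_right _ _)
  obtain ⟨hqW, hqd, hqN⟩ := H1 q (hqp.trans_le hsr1)
  have hzW := (H1 z (hzp.trans_le hsr1)).1
  have hρq := hfr q hqW hqf
  obtain ⟨t, hzt, ht⟩ := foot_point (z := z) (hρ1 q hqW) hqd (by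
    filter_upwards [self_mem_nhdsWithin, nhdsWithin_le_nhds (isOpen_ball.mem_nhds (show q ∈ ball p r1 from hqp.trans_le hsr1))]
      with y hy hyb
    have hyf : y ∈ frontier Ω := hfr2 y (H1 y hyb).1 (H1 y hyb).2.1 (by rw [hy, hρq])
    have := infDist_le_dist_of_mem (x := z) hyf
    rw [hq, dist_comm, dist_eq_norm, dist_comm, dist_eq_norm] at this
    exact pow_le_pow_left₀ (norm_nonneg _) this 2)
  have hdz : d z = t := by
    rw [hzt]
    exact hdd q t (hqp.trans_le hsr) (by linarith) hρq
  have htpos : 0 < t := by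
    by_contra! h
    have h3 := H2 (z, q) (by
      rw [mem_ball, Prod.dist_eq, max_lt_iff]; exact ⟨hzp.trans_le hsr2, hqp.trans_le hsr2⟩)
    simp only at h3
    rw [← dist_eq_norm z q, ← ht, hρq, abs_of_nonpos h, show z - q = t • nrm ρ q by rw [hzt]; abel_nf,
      map_smul, smul_eq_mul, Real.norm_eq_abs] at h3
    have h4 := (hmem z hzW).1 hzΩ
    have h5 := (abs_le.1 h3).1
    nlinarith
  rw [hq, hdz, ← ht, abs_of_pos htpos]
  exact ⟨rfl, htpos⟩

end SD2
end KL

namespace KL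
open Filter Topology

section Glue

theorem max_lemma {V : Type} [NormedAddCommGroup V] [NormedSpace ℂ V] {F : ℂ → V} {u : ℂ → ℝ} {r m B : ℝ}
    (hr : 0 < r) (hm : 0 < m)
    (h : ∀ ζ₀ ∈ closedBall (0:ℂ) r, (∀ᶠ ζ in 𝓝 ζ₀, DifferentiableAt ℂ F ζ ∧ u ζ = ‖F ζ‖) ∨
      (ζ₀ ≠ 0 ∧ u ζ₀ = m / ‖ζ₀‖ ∧ (∀ᶠ ζ in 𝓝 ζ₀, m / ‖ζ‖ ≤ u ζ) ∧ ContinuousAt u ζ₀))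
    (hB : ∀ ζ ∈ sphere (0:ℂ) r, u ζ ≤ B) : u 0 ≤ B := by
  have hcont : ContinuousOn u (closedBall 0 r) := by
    intro ζ hζ
    rcases h ζ hζ with h1 | h1
    · have h2 : ContinuousAt (fun ζ => ‖F ζ‖) ζ := h1.self_of_nhds.1.continuousAt.norm
      exact (h2.congr (h1.mono fun x hx => hx.2.symm)).continuousWithinAt
    · exact h1.2.2.2.continuousWithinAt
  have h0 : (0:ℂ) ∈ closedBall (0:ℂ) r := by simp [hr.le]
  obtain ⟨ζ₀, hζ₀, hmax⟩ := (isCompact_closedBall (0:ℂ) r).exists_isMaxOn ⟨0, h0⟩ hcont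
  have hle : ∀ ζ ∈ closedBall (0:ℂ) r, u ζ ≤ u ζ₀ := fun ζ hζ => hmax hζ
  refine (hle 0 h0).trans ?_
  by_contra! hlt
  let S : Set ℂ := closedBall 0 r ∩ u ⁻¹' {u ζ₀}
  have hSc : IsClosed S := hcont.preimage_isClosed_of_isClosed isClosed_closedBall isClosed_singleton
  have hSo : IsOpen S := by
    rw [isOpen_iff_mem_nhds]
    rintro ζ ⟨hζ, hu⟩
    have hu : u ζ = u ζ₀ := hu
    have hζb : ζ ∈ ball (0:ℂ) r := by
      rw [mem_closedBall] at hζ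
      rcases lt_or_eq_of_le hζ with h1 | h1
      · exact h1
      · have := hB ζ h1
        linarith
    have hnb := isOpen_ball.mem_nhds hζb
    rcases h ζ hζ with h1 | ⟨h1, h2, h3, -⟩
    · have hlm : IsLocalMax (norm ∘ F) ζ := by
        filter_upwards [hnb, h1] with x hx hx1
        show ‖F x‖ ≤ ‖F ζ‖
        rw [← hx1.2, ← h1.self_of_nhds.2, hu]
        exact hle x (ball_subset_closedBall hx)
      have := Complex.norm_eventually_eq_of_isLocalMax (h1.mono fun x hx => hx.1) hlm
      filter_upwards [this, h1, hnb] with x hx hx1 hx2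
      refine ⟨ball_subset_closedBall hx2, ?_⟩
      show u x = u ζ₀
      rw [hx1.2, hx, ← h1.self_of_nhds.2, hu]
    · exfalso
      have ht : Tendsto (fun t : ℝ => (t : ℂ) * ζ) (𝓝[<] 1) (𝓝 ζ) := by
        have : ContinuousAt (fun t : ℝ => (t : ℂ) * ζ) 1 := by fun_prop
        have h4 := this.tendsto
        simp only [Complex.ofReal_one, one_mul] at h4
        exact h4.mono_left nhdsWithin_le_nhds
      have h5 : ∀ᶠ t : ℝ in 𝓝[<] 1, 0 < t := nhdsWithin_le_nhds (lt_mem_nhds one_pos)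
      obtain ⟨t, ⟨⟨ht1, ht2⟩, ht3⟩, ht4⟩ :=
        (((ht.eventually h3).and (ht.eventually hnb)).and h5).and self_mem_nhdsWithin |>.exists
      have h6 := hle _ (ball_subset_closedBall ht2)
      have hn : 0 < ‖ζ‖ := norm_pos_iff.2 h1
      rw [norm_mul, Complex.norm_real, Real.norm_eq_abs, abs_of_pos ht3] at ht1
      have h7 : m / ‖ζ‖ < m / (t * ‖ζ‖) := by
        apply div_lt_div_of_pos_left hm (by positivity)
        have : t < 1 := ht4
        nlinarith
      linarith
  have huniv : S = univ := IsClopen.eq_univ ⟨hSc, hSo⟩ ⟨ζ₀, hζ₀, rfl⟩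
  have : ((r + 1 : ℝ) : ℂ) ∈ S := by rw [huniv]; trivial
  have h2 := this.1
  rw [mem_closedBall, dist_zero_right, Complex.norm_real, Real.norm_eq_abs, abs_of_pos (by linarith)] at h2
  linarith

theorem glue {E V : Type} [NormedAddCommGroup E] [NormedSpace ℂ E] [NormedAddCommGroup V] [NormedSpace ℂ V]
    [CompleteSpace V]
    {Ω : Set E} {z : E} {R b m c : ℝ} {Ψ : E → V} {G : E → ℝ} {φ : ℂ → E}
    (hR : 0 < R) (hm : 0 < m) (hmb : m ≤ b) (hc : 0 < c) (hGz : G z = 0) (hΨz : Ψ z = 0)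
    (hG : Continuous G) (hΨ : ∀ w ∈ Ω, dist w z ≤ R → DifferentiableAt ℂ Ψ w)
    (h1 : ∀ w ∈ Ω, dist w z ≤ R → ‖Ψ w‖ ≤ b)
    (h2 : ∀ w ∈ Ω, dist w z ≤ R → G w = -c → m < ‖Ψ w‖)
    (h3 : ∀ w ∈ Ω, dist w z = R → G w < -c ∧ ‖Ψ w‖ < m)
    (hφ : DifferentiableOn ℂ φ (ball 0 1)) (hφΩ : MapsTo φ (ball 0 1) Ω) (hφ0 : φ 0 = z) :
    ‖fderiv ℂ Ψ z (deriv φ 0)‖ ≤ b := by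
  classical
  have hφd : ∀ ζ ∈ ball (0:ℂ) 1, DifferentiableAt ℂ φ ζ := fun ζ hζ => hφ.differentiableAt (isOpen_ball.mem_nhds hζ)
  have h01 : (0:ℂ) ∈ ball (0:ℂ) 1 := by simp
  set f : ℂ → V := fun ζ => Ψ (φ ζ) with hf
  have hfd : ∀ ζ ∈ ball (0:ℂ) 1, dist (φ ζ) z ≤ R → DifferentiableAt ℂ f ζ := fun ζ hζ hd =>
    DifferentiableAt.comp ζ (hΨ _ (hφΩ hζ) hd) (hφd ζ hζ)
  have hf0 : f 0 = 0 := by simp [hf, hφ0, hΨz]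
  set F := dslope f 0 with hF
  have hζF : ∀ ζ, ‖ζ‖ * ‖F ζ‖ = ‖f ζ‖ := fun ζ => by
    have := sub_smul_dslope f 0 ζ
    rw [hf0, sub_zero, sub_zero] at this
    rw [← norm_smul, this]
  have hnear : ∀ ζ ∈ ball (0:ℂ) 1, dist (φ ζ) z < R → ∀ᶠ x in 𝓝 ζ, x ∈ ball (0:ℂ) 1 ∧ dist (φ x) z < R := by
    intro ζ hζ hd
    have : ContinuousAt (fun x => dist (φ x) z) ζ := (hφd ζ hζ).continuousAt.dist continuousAt_const
    exact (isOpen_ball.eventually_mem hζ).and (this.eventually (gt_mem_nhds hd))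
  have hFd : ∀ ζ ∈ ball (0:ℂ) 1, dist (φ ζ) z < R → DifferentiableAt ℂ F ζ := by
    intro ζ hζ hd
    by_cases hζ0 : ζ = 0
    · subst hζ0
      have h4 : {x | x ∈ ball (0:ℂ) 1 ∧ dist (φ x) z < R} ∈ 𝓝 (0:ℂ) := hnear 0 hζ hd
      have h5 : DifferentiableOn ℂ f {x | x ∈ ball (0:ℂ) 1 ∧ dist (φ x) z < R} :=
        fun x hx => (hfd x hx.1 hx.2.le).differentiableWithinAt
      exact ((Complex.differentiableOn_dslope h4).2 h5).differentiableAt h4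
    · exact (differentiableAt_dslope_of_ne hζ0).2 (hfd ζ hζ hd.le)
  have hF0 : F 0 = fderiv ℂ Ψ z (deriv φ 0) := by
    rw [hF, dslope_same]
    have h4 : HasFDerivAt Ψ (fderiv ℂ Ψ z) (φ 0) := by
      rw [hφ0]
      refine (hΨ z ?_ ?_).hasFDerivAt
      · rw [← hφ0]; exact hφΩ h01
      · rw [dist_self]; exact hR.le
    exact (h4.comp_hasDerivAt 0 (hφd 0 h01).hasDerivAt).deriv
  let w : ℂ → ℝ := fun ζ => if dist (φ ζ) z < R then (if -c < G (φ ζ) then ‖f ζ‖ else max ‖f ζ‖ m) else m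
  let u : ℂ → ℝ := fun ζ => if ζ = 0 then ‖F 0‖ else w ζ / ‖ζ‖
  have huF : ∀ ζ, w ζ = ‖f ζ‖ → u ζ = ‖F ζ‖ := by
    intro ζ hw
    by_cases hζ : ζ = 0
    · simp [u, hζ]
    · simp only [u, hζ, if_false, hw, ← hζF]
      have : ‖ζ‖ ≠ 0 := by simpa using hζ
      field_simp
  have hwb : ∀ ζ ∈ ball (0:ℂ) 1, w ζ ≤ b := by
    intro ζ hζ
    simp only [w]
    split_ifs with g1 g2
    · exact h1 _ (hφΩ hζ) g1.le
    · exact max_le (h1 _ (hφΩ hζ) g1.le) hmb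
    · exact hmb
  have hGφ : ∀ ζ ∈ ball (0:ℂ) 1, ContinuousAt (fun x => G (φ x)) ζ := fun ζ hζ =>
    hG.continuousAt.comp (hφd ζ hζ).continuousAt
  -- the w-equals-m alternative
  have halt : ∀ ζ ∈ ball (0:ℂ) 1, ζ ≠ 0 → w ζ = m → (∀ᶠ x in 𝓝 ζ, m ≤ w x) → ContinuousAt w ζ →
      (ζ ≠ 0 ∧ u ζ = m / ‖ζ‖ ∧ (∀ᶠ x in 𝓝 ζ, m / ‖x‖ ≤ u x) ∧ ContinuousAt u ζ) := by
    intro ζ hζ hζ0 hw hge hcw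
    have hne : ∀ᶠ x in 𝓝 ζ, x ≠ 0 := eventually_ne_nhds hζ0
    refine ⟨hζ0, by simp [u, hζ0, hw], ?_, ?_⟩
    · filter_upwards [hge, hne] with x hx hx0
      simp only [u, hx0, if_false]
      gcongr
    · have h4 : ContinuousAt (fun x => w x / ‖x‖) ζ := hcw.div continuous_norm.continuousAt (by simpa using hζ0)
      refine h4.congr (hne.mono fun x hx => ?_)
      simp [u, hx]
  have hu : ∀ ζ ∈ ball (0:ℂ) 1, (∀ᶠ x in 𝓝 ζ, DifferentiableAt ℂ F x ∧ u x = ‖F x‖) ∨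
      (ζ ≠ 0 ∧ u ζ = m / ‖ζ‖ ∧ (∀ᶠ x in 𝓝 ζ, m / ‖x‖ ≤ u x) ∧ ContinuousAt u ζ) := by
    intro ζ hζ
    have hcφ : ContinuousAt (fun x => dist (φ x) z) ζ := (hφd ζ hζ).continuousAt.dist continuousAt_const
    rcases lt_trichotomy (dist (φ ζ) z) R with hd | hd | hd
    · have hcf : ContinuousAt (fun x => ‖f x‖) ζ := (hfd ζ hζ hd.le).continuousAt.norm
      have hn := hnear ζ hζ hd
      rcases lt_or_ge (-c) (G (φ ζ)) with hg | hg
      · left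
        filter_upwards [hn, (hGφ ζ hζ).eventually (lt_mem_nhds hg)] with x hx hx2
        exact ⟨hFd x hx.1 hx.2, huF x (by simp [w, hx.2, hx2])⟩
      · rcases lt_or_ge m ‖f ζ‖ with hfm | hfm
        · left
          filter_upwards [hn, hcf.eventually (lt_mem_nhds hfm)] with x hx hx2
          refine ⟨hFd x hx.1 hx.2, huF x ?_⟩
          simp only [w, hx.2, if_true]
          split_ifs
          · rfl
          · exact max_eq_left hx2.le
        · right
          have hg' : G (φ ζ) < -c := by
            refine lt_of_le_of_ne hg fun he => ?_
            have := h2 _ (hφΩ hζ) hd.le he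
            exact absurd hfm (not_le.2 this)
          have hw : ∀ᶠ x in 𝓝 ζ, w x = max ‖f x‖ m := by
            filter_upwards [hn, (hGφ ζ hζ).eventually (gt_mem_nhds hg')] with x hx hx2
            simp [w, hx.2, not_lt.2 (le_of_lt hx2)]
          refine halt ζ hζ ?_ (by rw [hw.self_of_nhds, max_eq_right hfm]) (hw.mono fun x hx => by rw [hx]; exact le_max_right _ _) ?_
          · rintro rfl
            rw [hφ0, hGz] at hg'
            linarith
          · have h4 : ContinuousAt (fun x => max ‖f x‖ m) ζ := hcf.max continuousAt_const
            exact h4.congr (hw.mono fun x hx => hx.symm)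
    · right
      have hcf : ContinuousAt (fun x => ‖f x‖) ζ := (hfd ζ hζ hd.le).continuousAt.norm
      obtain ⟨g1, g2⟩ := h3 _ (hφΩ hζ) hd
      have hw : ∀ᶠ x in 𝓝 ζ, w x = m := by
        filter_upwards [(hGφ ζ hζ).eventually (gt_mem_nhds g1), hcf.eventually (gt_mem_nhds g2)] with x hx hx2
        simp only [w, not_lt.2 (le_of_lt hx), if_false, max_eq_right hx2.le, ite_self]
      refine halt ζ hζ ?_ hw.self_of_nhds (hw.mono fun x hx => hx.ge) (continuousAt_const.congr (hw.mono fun x hx => hx.symm))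
      rintro rfl
      rw [hφ0, dist_self] at hd
      linarith
    · right
      have hw : ∀ᶠ x in 𝓝 ζ, w x = m := by
        filter_upwards [hcφ.eventually (lt_mem_nhds hd)] with x hx
        simp only [w, not_lt.2 (le_of_lt hx), if_false]
      refine halt ζ hζ ?_ hw.self_of_nhds (hw.mono fun x hx => hx.ge) (continuousAt_const.congr (hw.mono fun x hx => hx.symm))
      rintro rfl
      rw [hφ0, dist_self] at hd
      linarith
  have hfin : ∀ r ∈ Ioo (0:ℝ) 1, r * ‖F 0‖ ≤ b := by
    intro r hr
    have hsub : closedBall (0:ℂ) r ⊆ ball 0 1 := closedBall_subset_ball hr.2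
    have := max_lemma (F := F) (u := u) (B := b / r) hr.1 hm (fun ζ hζ => hu ζ (hsub hζ)) (by
      intro ζ hζ
      have hn : ‖ζ‖ = r := by simpa using hζ
      have hζ0 : ζ ≠ 0 := by rw [← norm_pos_iff, hn]; exact hr.1
      simp only [u, hζ0, if_false, hn]
      have := hwb ζ (hsub (sphere_subset_closedBall hζ))
      have := hr.1
      gcongr)
    simp only [u, if_true] at this
    rw [le_div_iff₀ hr.1] at this
    linarith
  rw [← hF0]
  by_contra! hlt
  have hb : 0 < b := hm.trans_le hmb
  have hF0p : 0 < ‖F 0‖ := hb.trans hlt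
  have hq : b / ‖F 0‖ < 1 := (div_lt_one hF0p).2 hlt
  have hq0 : 0 < b / ‖F 0‖ := by positivity
  have := hfin ((b / ‖F 0‖ + 1) / 2) ⟨by linarith, by linarith⟩
  have e : b / ‖F 0‖ * ‖F 0‖ = b := by field_simp
  nlinarith

end Glue
end KL

namespace KL
open Filter Topology

section Pt

theorem rpow_split {x t τ : ℝ} (hx : 0 < x) (ht : 0 ≤ t) (hτ : 0 < τ) (hτ2 : τ ≤ 2) :
    x * t ^ (2 + τ) ≤ x ^ (τ / 2) * (x + t ^ 2) ^ 2 := by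
  have h1 : t ^ (2 + τ) = (t ^ 2) ^ (1 + τ / 2) := by
    rw [← Real.rpow_natCast t 2, ← Real.rpow_mul ht]; congr 1; push_cast; ring
  have h2 : x = x ^ (τ / 2) * x ^ (1 - τ / 2) := by
    rw [← Real.rpow_add hx]; ring_nf; simp
  have hy : 0 ≤ t ^ 2 := by positivity
  have hxy : 0 < x + t ^ 2 := by positivity
  have h3 : (x + t ^ 2) ^ 2 = (x + t ^ 2) ^ (1 - τ / 2) * (x + t ^ 2) ^ (1 + τ / 2) := by
    rw [← Real.rpow_add hxy, ← Real.rpow_natCast]; congr 1; push_cast; ring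
  rw [h1, h3]
  conv_lhs => rw [h2]
  rw [mul_assoc]
  gcongr
  · linarith
  · linarith
  · linarith

set_option maxHeartbeats 2000000 in
theorem pt_est {δ D C c K τ R t a σ y e SS : ℝ} (hδ : 0 < δ) (hδ1 : δ ≤ 1) (hD : 0 < D)
    (hτ : 0 < τ) (hτ2 : τ ≤ 2) (hC : 0 < C) (hc : 0 < c) (hc1 : c ≤ 1) (hK : 0 ≤ K)
    (ht : 0 ≤ t) (htR : t ≤ R) (hR1 : R ≤ 1) (hy : c * t ^ 2 ≤ y) (hy2 : y ≤ C ^ 2 * t ^ 2)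
    (hσ : 0 ≤ σ) (hσt : σ ≤ C * t) (haσ : |a| ≤ σ) (he : |e| ≤ C * (t ^ (2 + τ) + σ * t ^ 2))
    (hDe : D = δ + 2 * a - y + K * σ ^ 2 + e)
    (r1 : K * C * R ≤ 1 / 4) (r2 : C * R ^ τ + C ^ 2 * R ≤ c / 4)
    (r3 : K * C * R * (C ^ 2 + K * C ^ 2 + 1) ≤ c / 4)
    (hS : δ + a ≤ SS) (hS0 : 0 ≤ SS) (hσS : σ ≤ SS + δ) :
    δ + D + c * t ^ 2 ≤ 3 * SS ∧ |e| ≤ c / 4 * t ^ 2 ∧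
    δ * |e| ≤ (C * (9 / c ^ 2 + 12 / c)) * δ ^ (τ / 2) * SS ^ 2 ∧
    -2 * a + K * (2 * a ^ 2 - σ ^ 2) ≤ 2 * δ - c / 2 * t ^ 2 ∧
    -(-2 * a + K * (2 * a ^ 2 - σ ^ 2)) ≤ (2 * C + K * C ^ 2) * t := by
  have ht2 : 0 ≤ t ^ 2 := by positivity
  have hR : 0 ≤ R := ht.trans htR
  have hKC : 0 ≤ K * C := by positivity
  have e1 : |e| ≤ c / 4 * t ^ 2 := by
    refine he.trans ?_
    have h1 : t ^ (2 + τ) ≤ R ^ τ * t ^ 2 := by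
      rcases eq_or_lt_of_le ht with h | h
      · rw [← h, Real.zero_rpow (by positivity)]; positivity
      · rw [Real.rpow_add h, mul_comm]
        have : t ^ (2:ℝ) = t ^ 2 := by exact_mod_cast Real.rpow_natCast t 2
        rw [this]
        gcongr
    have h2 : σ * t ^ 2 ≤ C * R * t ^ 2 := by
      gcongr
      exact hσt.trans (by gcongr)
    calc C * (t ^ (2 + τ) + σ * t ^ 2) ≤ C * (R ^ τ * t ^ 2 + C * R * t ^ 2) := by gcongr
      _ = (C * R ^ τ + C ^ 2 * R) * t ^ 2 := by ring
      _ ≤ c / 4 * t ^ 2 := by gcongr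
  have e1' := abs_le.1 e1
  have ha := abs_le.1 haσ
  have e2 : K * σ ^ 2 ≤ 1 / 4 * (SS + δ) := by
    calc K * σ ^ 2 = (K * σ) * σ := by ring
      _ ≤ (K * (C * R)) * (SS + δ) := by
        gcongr
        exact hσt.trans (by gcongr)
      _ ≤ 1 / 4 * (SS + δ) := by
        have : 0 ≤ SS + δ := by positivity
        gcongr
        linarith
  have e3 : δ + D + c * t ^ 2 ≤ 3 * SS := by nlinarith
  have hSp : 0 < SS := by nlinarith [mul_nonneg hc.le ht2]
  have hct : 0 ≤ c * t ^ 2 := by positivity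
  refine ⟨e3, e1, ?_, ?_, ?_⟩
  · have f1 : δ * t ^ (2 + τ) ≤ δ ^ (τ / 2) * (9 / c ^ 2 * SS ^ 2) := by
      refine (rpow_split hδ ht hτ hτ2).trans ?_
      gcongr
      have g1 : c * (δ + t ^ 2) ≤ 3 * SS := by nlinarith
      have g2 : (c * (δ + t ^ 2)) ^ 2 ≤ (3 * SS) ^ 2 := by gcongr
      rw [div_mul_eq_mul_div, le_div_iff₀ (by positivity)]
      nlinarith
    have f2 : δ * (σ * t ^ 2) ≤ δ ^ (τ / 2) * (12 / c * SS ^ 2) := by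
      have g0 : δ ≤ δ ^ (τ / 2) := by
        conv_lhs => rw [← Real.rpow_one δ]
        exact Real.rpow_le_rpow_of_exponent_ge hδ hδ1 (by linarith)
      have g1 : σ ≤ 4 * SS := by linarith
      have g2 : t ^ 2 ≤ 3 / c * SS := by
        rw [div_mul_eq_mul_div, le_div_iff₀ hc]; linarith
      calc δ * (σ * t ^ 2) ≤ δ ^ (τ / 2) * ((4 * SS) * (3 / c * SS)) := by gcongr
        _ = _ := by ring
    calc δ * |e| ≤ δ * (C * (t ^ (2 + τ) + σ * t ^ 2)) := by gcongr
      _ = C * (δ * t ^ (2 + τ) + δ * (σ * t ^ 2)) := by ring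
      _ ≤ C * (δ ^ (τ / 2) * (9 / c ^ 2 * SS ^ 2) + δ ^ (τ / 2) * (12 / c * SS ^ 2)) := by gcongr
      _ = _ := by ring
  · have h1 : |2 * a| ≤ D + δ + (C ^ 2 + K * C ^ 2 + 1) * t ^ 2 := by
      have hs2 : K * σ ^ 2 ≤ K * C ^ 2 * t ^ 2 := by
        have h9 : σ ^ 2 ≤ (C * t) ^ 2 := by gcongr
        calc K * σ ^ 2 ≤ K * (C * t) ^ 2 := by gcongr
          _ = _ := by ring
      have : 0 ≤ K * σ ^ 2 := by positivity
      have h10 : c / 4 * t ^ 2 ≤ 1 * t ^ 2 := by gcongr; linarith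
      have h11 : 0 ≤ C ^ 2 * t ^ 2 := by positivity
      rw [abs_le]
      constructor <;> linarith
    have h2 : K * (2 * a ^ 2) ≤ K * C * R * (D + δ + (C ^ 2 + K * C ^ 2 + 1) * t ^ 2) := by
      have : 2 * a ^ 2 = |a| * |2 * a| := by
        rw [abs_mul, abs_two]
        linarith [abs_mul_abs_self a]
      rw [this]
      have h3 : |a| ≤ C * R := haσ.trans (hσt.trans (by gcongr))
      calc K * (|a| * |2 * a|) ≤ K * ((C * R) * (D + δ + (C ^ 2 + K * C ^ 2 + 1) * t ^ 2)) := by gcongr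
        _ = _ := by ring
    have h4 : K * C * R * (D + δ + (C ^ 2 + K * C ^ 2 + 1) * t ^ 2) ≤ 1 / 4 * (D + δ) + c / 4 * t ^ 2 := by
      have h5 : 0 ≤ D + δ := by positivity
      have h6 := mul_le_mul_of_nonneg_right r1 h5
      have h7 := mul_le_mul_of_nonneg_right r3 ht2
      linarith
    have h8 : 0 ≤ K * σ ^ 2 := by positivity
    linarith
  · have h1 : σ ^ 2 ≤ C ^ 2 * t := by
      have : σ ^ 2 ≤ (C * t) ^ 2 := by gcongr
      have : t ^ 2 ≤ t := by nlinarith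
      have : 0 < C ^ 2 := by positivity
      nlinarith
    have h2 : K * σ ^ 2 ≤ K * (C ^ 2 * t) := by gcongr
    have h3 : 0 ≤ K * a ^ 2 := by positivity
    linarith

end Pt
end KL

namespace KL
open Filter Topology

section Core

theorem exists_R {C c K τ ρ0 : ℝ} (hτ : 0 < τ) (hc : 0 < c) (hρ0 : 0 < ρ0) :
    ∃ R : ℝ, 0 < R ∧ R ≤ 1 ∧ R ≤ ρ0 ∧ K * C * R ≤ 1 / 4 ∧ C * R ^ τ + C ^ 2 * R ≤ c / 4 ∧
      K * C * R * (C ^ 2 + K * C ^ 2 + 1) ≤ c / 4 := by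
  have hcr : Continuous (fun R : ℝ => R ^ τ) := Real.continuous_rpow_const hτ.le
  have key : ∀ f : ℝ → ℝ, Continuous f → f 0 = 0 → ∀ b > 0, ∀ᶠ R in 𝓝[>] (0:ℝ), f R ≤ b := by
    intro f hf h0 b hb
    have : ∀ᶠ R in 𝓝 (0:ℝ), f R < b := hf.continuousAt.eventually (gt_mem_nhds (by rw [h0]; exact hb))
    have h2 : ∀ᶠ R in 𝓝[>] (0:ℝ), f R < b := nhdsWithin_le_nhds this
    exact h2.mono fun x hx => le_of_lt hx
  have h0 : ∀ᶠ R in 𝓝[>] (0:ℝ), 0 < R := self_mem_nhdsWithin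
  obtain ⟨R, h⟩ := (h0.and ((key (fun R => R) continuous_id rfl 1 one_pos).and
    ((key (fun R => R) continuous_id rfl ρ0 hρ0).and
    ((key (fun R => K * C * R) (by fun_prop) (by simp) (1/4) (by norm_num)).and
    ((key (fun R => C * R ^ τ + C ^ 2 * R) (by fun_prop) (by simp [Real.zero_rpow hτ.ne']) (c/4) (by positivity)).and
    (key (fun R => K * C * R * (C ^ 2 + K * C ^ 2 + 1)) (by fun_prop) (by simp) (c/4) (by positivity))))))).exists
  exact ⟨R, h⟩

variable {E V : Type} [NormedAddCommGroup E] [NormedSpace ℂ E] [NormedAddCommGroup V] [InnerProductSpace ℂ V]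
  [CompleteSpace V]

/-- the vector-valued numerator -/
def num (κ μ : ℝ) (s : E → ℂ) (g : E → V) (w : E) : WithLp 2 (ℂ × V) :=
  WithLp.toLp 2 ((κ : ℂ) * s w, (μ : ℂ) • g w)

theorem num_norm (κ μ : ℝ) (s : E → ℂ) (g : E → V) (w : E) :
    ‖num κ μ s g w‖ ^ 2 = κ ^ 2 * ‖s w‖ ^ 2 + μ ^ 2 * ‖g w‖ ^ 2 := by
  rw [WithLp.prod_norm_sq_eq_of_L2]
  simp [num, norm_smul, mul_pow]

theorem num_deriv (κ μ : ℝ) {s : E → ℂ} {g : E → V} (hs : Differentiable ℂ s) (hg : Differentiable ℂ g) (w : E) :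
    DifferentiableAt ℂ (num κ μ s g) w ∧ ∀ X, ‖fderiv ℂ (num κ μ s g) w X‖ ^ 2 =
      κ ^ 2 * ‖fderiv ℂ s w X‖ ^ 2 + μ ^ 2 * ‖fderiv ℂ g w X‖ ^ 2 := by
  have h1 := (((hs w).hasFDerivAt.const_mul (κ : ℂ)).prodMk ((hg w).hasFDerivAt.const_smul (μ : ℂ)))
  have h2 := ((WithLp.prodContinuousLinearEquiv 2 ℂ ℂ V).symm : (ℂ × V) →L[ℂ] WithLp 2 (ℂ × V)).hasFDerivAt.comp w h1
  have h3 : HasFDerivAt (num κ μ s g) _ w := h2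
  refine ⟨h3.differentiableAt, fun X => ?_⟩
  rw [h3.fderiv, WithLp.prod_norm_sq_eq_of_L2]
  simp [norm_smul, mul_pow]

theorem expd (a b c d : ℝ) : (a + b + c + 1) * d = a * d + b * d + c * d + d := by ring

theorem e1 {u : ℝ} (h0 : 0 ≤ u) (h1 : u ≤ 1 / 4) : Real.exp (2 * u) ≤ 1 + 4 * u := by
  have g5 := Real.add_one_le_exp (-(2 * u))
  have g7 := Real.exp_pos (2 * u)
  have g8 : Real.exp (-(2 * u)) * Real.exp (2 * u) = 1 := by rw [← Real.exp_add]; simp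
  have g9 : (-(2 * u) + 1) * Real.exp (2 * u) ≤ 1 := (mul_le_mul_of_nonneg_right g5 g7.le).trans_eq g8
  have h10 : (1 + 4 * u) * (-(2 * u) + 1) ≥ 1 := by nlinarith
  by_contra! hcon
  have : (1 + 4 * u) * (-(2 * u) + 1) < Real.exp (2 * u) * (-(2 * u) + 1) :=
    mul_lt_mul_of_pos_right hcon (by linarith)
  linarith

theorem e2 {v δ : ℝ} (h0 : 0 ≤ v) (h1 : v ≤ 1 / 4) (hδ : 0 < δ) : Real.exp (-(4 * v + 4 * δ)) < 1 - v := by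
  have g5 := Real.add_one_le_exp (4 * v + 4 * δ)
  have g6 : Real.exp (-(4 * v + 4 * δ)) * Real.exp (4 * v + 4 * δ) = 1 := by rw [← Real.exp_add]; simp
  have g7 : 1 < (1 - v) * (4 * v + 4 * δ + 1) := by nlinarith [mul_nonneg h0 hδ.le]
  have g8 := Real.exp_pos (4 * v + 4 * δ)
  by_contra! hcon
  have : (1 - v) * (4 * v + 4 * δ + 1) ≤ Real.exp (-(4 * v + 4 * δ)) * Real.exp (4 * v + 4 * δ) :=
    mul_le_mul hcon g5 (by linarith) (Real.exp_pos _).le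
  linarith

theorem e3 {a b : ℝ} (ha : 0 ≤ a) (hb : 0 ≤ b) : (1 + 4 * a) * (1 + b) ≤ (1 + (b + 4 * a)) ^ 2 := by
  nlinarith [mul_nonneg ha hb]

theorem e4 {C2 S : ℝ} (hS : 0 ≤ S) (h : 1 ≤ C2 / 4 * S) : 3 * S ≤ C2 * S ^ 2 := by
  nlinarith

set_option maxHeartbeats 1000000 in
theorem core {C c K τ ρ0 : ℝ} (hτ : 0 < τ) (hτ2 : τ ≤ 2) (hC : 0 < C) (hc : 0 < c) (hc1 : c ≤ 1) (hK : 0 ≤ K)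
    (hρ0 : 0 < ρ0) : ∃ C' δ0 : ℝ, 0 < C' ∧ 0 < δ0 ∧ ∀ (Ω : Set E) (z : E) (dlt : E → ℝ) (s : E → ℂ) (g : E → V),
      Differentiable ℂ s → Differentiable ℂ g → s z = 0 → g z = 0 → z ∈ Ω → dlt z ≤ δ0 →
      (∀ w ∈ Ω, dist w z ≤ ρ0 → 0 < dlt w ∧
        |dlt w - (dlt z + 2 * (s w).re - ‖g w‖ ^ 2 + K * ‖s w‖ ^ 2)| ≤
          C * (dist w z ^ (2 + τ) + ‖s w‖ * dist w z ^ 2) ∧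
        c * dist w z ^ 2 ≤ ‖g w‖ ^ 2 ∧ ‖g w‖ ≤ C * dist w z ∧ ‖s w‖ ≤ C * dist w z) →
      ∀ φ : ℂ → E, DifferentiableOn ℂ φ (ball 0 1) → MapsTo φ (ball 0 1) Ω → φ 0 = z →
        ((1 - K * dlt z) * ‖fderiv ℂ s z (deriv φ 0)‖ ^ 2 + dlt z * ‖fderiv ℂ g z (deriv φ 0)‖ ^ 2) / dlt z ^ 2
          ≤ (1 + C' * dlt z ^ (τ / 2)) ^ 2 := by
  obtain ⟨R, hR, hR1, hRρ, r1, r2, r3⟩ := exists_R (C := C) (K := K) hτ hc hρ0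
  obtain ⟨C1, hC1⟩ : ∃ x : ℝ, x = C * (9 / c ^ 2 + 12 / c) := ⟨_, rfl⟩
  have hC1p : 0 < C1 := by rw [hC1]; positivity
  obtain ⟨c1, hc1'⟩ : ∃ x : ℝ, x = c * R ^ 2 / 16 := ⟨_, rfl⟩
  have hc1p : 0 < c1 := by rw [hc1']; positivity
  obtain ⟨t1, ht1⟩ : ∃ x : ℝ, x = c1 / (2 * C + K * C ^ 2 + 1) := ⟨_, rfl⟩
  have ht1p : 0 < t1 := by rw [ht1]; positivity
  obtain ⟨C2, hC2⟩ : ∃ x : ℝ, x = 12 / (c * t1 ^ 2) := ⟨_, rfl⟩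
  have hC2p : 0 < C2 := by rw [hC2]; positivity
  obtain ⟨A, hA⟩ : ∃ x : ℝ, x = (4 * C2 + 4) / c1 := ⟨_, rfl⟩
  have hAp : 0 < A := by rw [hA]; positivity
  have hAc : A * c1 = 4 * C2 + 4 := by rw [hA]; field_simp
  refine ⟨C1 + 4 * A, min 1 (min (c * R ^ 2 / 8) (1 / (4 * (C2 + K + A + 1)))), by positivity, by positivity, ?_⟩
  intro Ω z dlt s g hs hg hsz hgz hzΩ hδ0 H φ hφ hφΩ hφ0
  set δ := dlt z with hδdef
  have hδ : 0 < δ := (H z hzΩ (by rw [dist_self]; exact hρ0.le)).1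
  have hδ1 : δ ≤ 1 := hδ0.trans (min_le_left _ _)
  have hδ2 : 2 * δ ≤ 4 * c1 := by
    have := hδ0.trans ((min_le_right _ _).trans (min_le_left _ _))
    rw [hc1']; linarith
  have hδ3 : (C2 + K + A + 1) * δ ≤ 1 / 4 := by
    have := hδ0.trans ((min_le_right _ _).trans (min_le_right _ _))
    rw [le_div_iff₀ (by positivity)] at this
    linarith
  have hC2δ : C2 * δ ≤ 1 / 4 := by linarith [mul_nonneg hK hδ.le, mul_pos hAp hδ, mul_pos hC2p hδ, expd C2 K A δ]
  have hKδ : K * δ ≤ 1 / 4 := by linarith [mul_nonneg hK hδ.le, mul_pos hAp hδ, mul_pos hC2p hδ, expd C2 K A δ]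
  have hAδ : A * δ ≤ 1 / 4 := by linarith [mul_nonneg hK hδ.le, mul_pos hAp hδ, mul_pos hC2p hδ, expd C2 K A δ]
  set x := δ ^ (τ / 2) with hx
  have hxp : 0 < x := Real.rpow_pos_of_pos hδ _
  have hδx : δ ≤ x := by
    conv_lhs => rw [← Real.rpow_one δ]
    exact Real.rpow_le_rpow_of_exponent_ge hδ hδ1 (by linarith)
  let P : E → ℂ := fun w => -(s w - (K / 2 : ℝ) * s w ^ 2)
  let G : E → ℝ := fun w => 2 * (P w).re
  let N : E → ℝ := fun w => (1 - K * δ) * ‖s w‖ ^ 2 + δ * ‖g w‖ ^ 2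
  let SS : E → ℝ := fun w => ‖(δ : ℂ) + s w‖
  have hGeq : ∀ w, G w = -2 * (s w).re + K * (2 * (s w).re ^ 2 - ‖s w‖ ^ 2) := by
    intro w
    have h1 : ‖s w‖ ^ 2 = (s w).re ^ 2 + (s w).im ^ 2 := by
      rw [← Complex.normSq_eq_norm_sq, Complex.normSq_apply]; ring
    have h2 : (s w ^ 2).re = (s w).re ^ 2 - (s w).im ^ 2 := by
      rw [sq (s w), Complex.mul_re]; ring
    simp only [G, P, Complex.neg_re, Complex.sub_re, Complex.re_ofReal_mul, h2, h1]
    ring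
  have hSSq : ∀ w, SS w ^ 2 = δ ^ 2 + 2 * δ * (s w).re + ‖s w‖ ^ 2 := by
    intro w
    simp only [SS]
    rw [← Complex.normSq_eq_norm_sq, ← Complex.normSq_eq_norm_sq, Complex.normSq_apply, Complex.normSq_apply]
    simp
    ring
  have PT : ∀ w ∈ Ω, dist w z ≤ R → 0 < SS w ∧ N w ≤ (1 + C1 * x) * SS w ^ 2 ∧
      (t1 ≤ dist w z → (1 - C2 * δ) * SS w ^ 2 ≤ N w ∧ N w ≤ (1 + C2 * δ) * SS w ^ 2) ∧
      G w ≤ 2 * δ - c / 2 * dist w z ^ 2 ∧ -G w ≤ (2 * C + K * C ^ 2) * dist w z := by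
    intro w hw hwR
    obtain ⟨hD, he, hy, hy2, hσ⟩ := H w hw (hwR.trans hRρ)
    set e := dlt w - (δ + 2 * (s w).re - ‖g w‖ ^ 2 + K * ‖s w‖ ^ 2) with hedef
    have hS1 : δ + (s w).re ≤ SS w := by
      have := Complex.re_le_norm ((δ : ℂ) + s w)
      simpa using this
    have hS2 : ‖s w‖ ≤ SS w + δ := by
      have : s w = ((δ : ℂ) + s w) - (δ : ℂ) := by ring
      calc ‖s w‖ = ‖((δ : ℂ) + s w) - (δ : ℂ)‖ := by rw [← this]
        _ ≤ ‖(δ : ℂ) + s w‖ + ‖(δ : ℂ)‖ := norm_sub_le _ _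
        _ = SS w + δ := by rw [Complex.norm_real, Real.norm_eq_abs, abs_of_pos hδ]
    obtain ⟨q1, q2, q3, q4, q5⟩ := pt_est (D := dlt w) (e := e) (SS := SS w) hδ hδ1 hD hτ hτ2 hC hc hc1 hK dist_nonneg hwR hR1 hy
      (by rw [← mul_pow]; gcongr) (norm_nonneg (s w)) hσ (Complex.abs_re_le_norm _) he
      (by rw [hedef]; ring) r1 r2 r3 hS1 (norm_nonneg _) hS2
    have hct : 0 ≤ c * dist w z ^ 2 := by positivity
    have hSp : 0 < SS w := by linarith
    have hN : N w = SS w ^ 2 - δ * dlt w + δ * e := by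
      rw [hSSq, hedef]; simp only [N]; ring
    have hee := abs_le.1 (le_refl |e|)
    refine ⟨hSp, ?_, ?_, ?_, ?_⟩
    · rw [hN]
      have h1 : δ * e ≤ δ * |e| := by gcongr; exact hee.2
      have h2 : 0 < δ * dlt w := by positivity
      have h3 : δ * |e| ≤ C1 * x * SS w ^ 2 := by rw [hC1, hx]; exact q3
      linarith
    · intro htt
      have h1 : δ * (dlt w + |e|) ≤ C2 * δ * SS w ^ 2 := by
        have g1 : dlt w + |e| ≤ 3 * SS w := by linarith
        have g2 : c * t1 ^ 2 ≤ 3 * SS w := by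
          have : c * t1 ^ 2 ≤ c * dist w z ^ 2 := by gcongr
          linarith
        have g3 : 1 ≤ C2 / 4 * SS w := by
          rw [hC2, div_div, div_mul_eq_mul_div, le_div_iff₀ (by positivity)]
          linarith
        have g4 : 3 * SS w ≤ C2 * SS w ^ 2 := e4 hSp.le g3
        calc δ * (dlt w + |e|) ≤ δ * (C2 * SS w ^ 2) := mul_le_mul_of_nonneg_left (g1.trans g4) hδ.le
          _ = _ := by ring
      have h2 : 0 < δ * dlt w := by positivity
      have h3 : δ * e ≤ δ * |e| := by gcongr; exact hee.2
      have h4 : -(δ * |e|) ≤ δ * e := by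
        rw [← mul_neg]; exact mul_le_mul_of_nonneg_left hee.1 hδ.le
      rw [mul_add] at h1
      rw [hN]
      constructor <;> linarith
    · rw [hGeq]; exact q4
    · rw [hGeq]; exact q5
  let κ := Real.sqrt (1 - K * δ)
  let μ := Real.sqrt δ
  have hκ : κ ^ 2 = 1 - K * δ := Real.sq_sqrt (by linarith)
  have hμ : μ ^ 2 = δ := Real.sq_sqrt hδ.le
  let k : E → ℂ := fun w => Complex.exp ((A * δ : ℝ) * P w) / ((δ : ℂ) + s w)
  let Ψ : E → WithLp 2 (ℂ × V) := fun w => k w • num κ μ s g w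
  have hΨn : ∀ w, ‖Ψ w‖ ^ 2 = Real.exp (A * δ * G w) * (N w / SS w ^ 2) := by
    intro w
    have h1 : ‖Complex.exp ((A * δ : ℝ) * P w)‖ ^ 2 = Real.exp (A * δ * G w) := by
      rw [Complex.norm_exp, Complex.re_ofReal_mul, ← Real.exp_nat_mul]
      congr 1
      simp only [G]
      push_cast
      ring
    simp only [Ψ, k]
    rw [norm_smul, mul_pow, num_norm, norm_div, div_pow, h1, hκ, hμ]
    simp only [N, SS]
    ring
  have hP : Differentiable ℂ P := by
    intro w
    exact ((hs w).sub ((differentiableAt_const _).mul ((hs w).pow 2))).neg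
  have hkd : ∀ w ∈ Ω, dist w z ≤ R → DifferentiableAt ℂ k w := by
    intro w hw hwR
    have h0 : (δ : ℂ) + s w ≠ 0 := norm_pos_iff.1 (PT w hw hwR).1
    have hden : DifferentiableAt ℂ (fun w => (δ : ℂ) + s w) w := (differentiableAt_const _).add (hs w)
    have hnum : DifferentiableAt ℂ (fun w => Complex.exp ((A * δ : ℝ) * P w)) w :=
      ((differentiableAt_const _).mul (hP w)).cexp
    have hinv : DifferentiableAt ℂ (fun w => ((δ : ℂ) + s w)⁻¹) w := hden.inv h0
    simp only [k, div_eq_mul_inv]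
    exact hnum.mul hinv
  have hzR : dist z z ≤ R := by rw [dist_self]; exact hR.le
  have hkz : k z = (δ : ℂ)⁻¹ := by simp [k, P, hsz]
  have hnz : num κ μ s g z = 0 := by
    rw [num, hsz, hgz, mul_zero, smul_zero]; rfl
  have hexp1 : ∀ u : ℝ, 1 + u ≤ Real.exp u := fun u => by linarith [Real.add_one_le_exp u]
  have hm2 : Real.exp (-(A * c1 * δ)) ^ 2 = Real.exp (-(2 * (A * c1 * δ))) := by
    rw [← Real.exp_nat_mul]; congr 1; push_cast; ring
  have hAcδ : 0 < A * c1 * δ := by positivity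
  have hfin := glue (Ω := Ω) (z := z) (R := R) (b := 1 + (C1 + 4 * A) * x) (m := Real.exp (-(A * c1 * δ))) (c := c1)
    (Ψ := Ψ) (G := G) (φ := φ) hR (Real.exp_pos _) ?_ hc1p ?_ ?_ ?_ ?_ ?_ ?_ ?_ hφ hφΩ hφ0
  · have h1 : HasFDerivAt Ψ _ z := (hkd z hzΩ hzR).hasFDerivAt.smul (num_deriv κ μ hs hg z).1.hasFDerivAt
    have h2 : ∀ X, ‖fderiv ℂ Ψ z X‖ ^ 2 = ((1 - K * δ) * ‖fderiv ℂ s z X‖ ^ 2 + δ * ‖fderiv ℂ g z X‖ ^ 2) / δ ^ 2 := by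
      intro X
      have h3 : fderiv ℂ Ψ z X = (δ : ℂ)⁻¹ • fderiv ℂ (num κ μ s g) z X := by
        rw [h1.fderiv]
        simp [hnz, hkz]
      rw [h3, norm_smul, mul_pow, (num_deriv κ μ hs hg z).2, hκ, hμ, norm_inv, Complex.norm_real,
        Real.norm_eq_abs, abs_of_pos hδ]
      field_simp
    rw [← h2]
    exact pow_le_pow_left₀ (norm_nonneg _) hfin 2
  · have : Real.exp (-(A * c1 * δ)) ≤ 1 := Real.exp_le_one_iff.2 (by linarith)
    have : 0 < (C1 + 4 * A) * x := by positivity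
    linarith
  · simp [G, P, hsz]
  · show k z • num κ μ s g z = 0
    rw [hnz, smul_zero]
  · exact continuous_const.mul (Complex.continuous_re.comp hP.continuous)
  · intro w hw hwR
    exact (hkd w hw hwR).smul (num_deriv κ μ hs hg w).1
  · intro w hw hwR
    obtain ⟨hSp, p1, -, p3, -⟩ := PT w hw hwR
    have hb : 0 ≤ 1 + (C1 + 4 * A) * x := by positivity
    refine le_of_sq_le_sq ?_ hb
    rw [hΨn]
    have g1 : N w / SS w ^ 2 ≤ 1 + C1 * x := by rwa [div_le_iff₀ (by positivity)]
    have g2 : Real.exp (A * δ * G w) ≤ 1 + 4 * A * x := by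
      have g3 : G w ≤ 2 := by linarith [mul_nonneg hc.le (sq_nonneg (dist w z))]
      have g4 : A * δ * G w ≤ 2 * (A * δ) := by
        rw [mul_comm 2]; exact mul_le_mul_of_nonneg_left g3 (mul_pos hAp hδ).le
      refine (Real.exp_le_exp.2 g4).trans ?_
      have g6 : Real.exp (2 * (A * δ)) ≤ 1 + 4 * (A * δ) := e1 (mul_pos hAp hδ).le hAδ
      have : A * δ ≤ A * x := by gcongr
      linarith
    have hN0 : 0 ≤ 1 + C1 * x := by positivity
    calc Real.exp (A * δ * G w) * (N w / SS w ^ 2) ≤ (1 + 4 * A * x) * (1 + C1 * x) := by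
          gcongr
          have : 0 ≤ N w := by
            simp only [N]
            have : 0 ≤ 1 - K * δ := by linarith
            positivity
          positivity
      _ ≤ (1 + (C1 + 4 * A) * x) ^ 2 := by
          have h8 := e3 (mul_pos hAp hxp).le (mul_pos hC1p hxp).le
          rw [mul_assoc 4 A x]
          refine h8.trans_eq ?_
          ring
  · intro w hw hwR hGw
    obtain ⟨hSp, -, p2, -, p4⟩ := PT w hw hwR
    have htt : t1 ≤ dist w z := by
      rw [ht1, div_le_iff₀ (by positivity)]
      rw [hGw] at p4
      have := dist_nonneg (x := w) (y := z)
      linarith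
    have g1 : 1 - C2 * δ ≤ N w / SS w ^ 2 := by
      rw [le_div_iff₀ (by positivity)]; exact (p2 htt).1
    refine lt_of_pow_lt_pow_left₀ 2 (norm_nonneg _) ?_
    rw [hΨn, hm2, hGw]
    have g2 : A * δ * -c1 = -(A * c1 * δ) := by ring
    have g3 : -(2 * (A * c1 * δ)) = -(A * c1 * δ) + -(A * c1 * δ) := by ring
    rw [g2, g3, Real.exp_add]
    have g4 : Real.exp (-(A * c1 * δ)) < N w / SS w ^ 2 := by
      refine lt_of_lt_of_le ?_ g1
      have g5 : A * c1 * δ = 4 * (C2 * δ) + 4 * δ := by rw [hAc]; ring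
      rw [g5]
      exact e2 (mul_pos hC2p hδ).le hC2δ hδ
    exact mul_lt_mul_of_pos_left g4 (Real.exp_pos _)
  · intro w hw hwR
    obtain ⟨hSp, -, p2, p3, -⟩ := PT w hw hwR.le
    have htt : t1 ≤ dist w z := by
      rw [hwR, ht1, div_le_iff₀ (by positivity)]
      have h1 : c1 ≤ R := by 
        have h3 : R ^ 2 ≤ R := by rw [sq]; exact mul_le_of_le_one_left hR.le hR1
        have h4 : c * R ^ 2 ≤ 1 * R := mul_le_mul hc1 h3 (sq_nonneg _) zero_le_one
        linarith
      have h2 : 0 ≤ R * (2 * C + K * C ^ 2) := by positivity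
      linarith
    have hG4 : G w ≤ -(4 * c1) := by
      rw [hwR] at p3
      have : c / 2 * R ^ 2 = 8 * c1 := by rw [hc1']; ring
      linarith
    refine ⟨by linarith, ?_⟩
    have g1 : N w / SS w ^ 2 ≤ 1 + C2 * δ := by
      rw [div_le_iff₀ (by positivity)]; exact (p2 htt).2
    refine lt_of_pow_lt_pow_left₀ 2 (Real.exp_pos _).le ?_
    rw [hΨn, hm2]
    have g2 : A * δ * G w ≤ -(2 * (A * c1 * δ)) + -(2 * (A * c1 * δ)) := by
      have := mul_le_mul_of_nonneg_left hG4 (by positivity : 0 ≤ A * δ)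
      linarith
    have g3 : 1 + C2 * δ < Real.exp (2 * (A * c1 * δ)) := by
      refine lt_of_lt_of_le ?_ (hexp1 _)
      rw [hAc]; linarith [mul_pos hC2p hδ, expd (4 * C2) 3 0 δ]
    calc Real.exp (A * δ * G w) * (N w / SS w ^ 2) ≤
        Real.exp (-(2 * (A * c1 * δ)) + -(2 * (A * c1 * δ))) * (1 + C2 * δ) := by
          have h5 : 0 ≤ 1 + C2 * δ := by linarith [mul_pos hC2p hδ]
          exact (mul_le_mul_of_nonneg_left g1 (Real.exp_pos _).le).trans
            (mul_le_mul_of_nonneg_right (Real.exp_le_exp.2 g2) h5)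
      _ < Real.exp (-(2 * (A * c1 * δ)) + -(2 * (A * c1 * δ))) * Real.exp (2 * (A * c1 * δ)) :=
          mul_lt_mul_of_pos_left g3 (Real.exp_pos _)
      _ = _ := by rw [← Real.exp_add]; congr 1; ring

end Core
end KL

namespace KL
open Filter Topology
set_option maxSynthPendingDepth 3

/-- cubic real polynomials of the required shape -/
def Cub {n : ℕ} (M : ℝ) (f : Cn n → ℝ) : Prop :=
  ∃ (c : Cn n → ℂ) (β : Cn n → Cn n), Differentiable ℂ c ∧ Differentiable ℂ β ∧
    (∀ h, ‖c h‖ ≤ M * ‖h‖ ^ 3) ∧ (∀ h, ‖β h‖ ≤ M * ‖h‖ ^ 2) ∧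
    ∀ h, f h = (c h).re + 2 * (inner ℂ h (β h)).re

theorem Cub.add {n : ℕ} {M N : ℝ} {f g : Cn n → ℝ} (hf : Cub M f) (hg : Cub N g) :
    Cub (M + N) (fun h => f h + g h) := by
  obtain ⟨c, β, h1, h2, h3, h4, h5⟩ := hf
  obtain ⟨c', β', h1', h2', h3', h4', h5'⟩ := hg
  refine ⟨fun h => c h + c' h, fun h => β h + β' h, h1.add h1', h2.add h2', fun h => ?_, fun h => ?_, fun h => ?_⟩
  · rw [add_mul]; exact (norm_add_le _ _).trans (add_le_add (h3 h) (h3' h))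
  · rw [add_mul]; exact (norm_add_le _ _).trans (add_le_add (h4 h) (h4' h))
  · show f h + g h = (c h + c' h).re + 2 * (inner ℂ h (β h + β' h)).re
    rw [h5, h5', inner_add_right, Complex.add_re, Complex.add_re]; ring

theorem Cub.zero {n : ℕ} : Cub 0 (fun _ : Cn n => (0:ℝ)) :=
  ⟨fun _ => 0, fun _ => 0, differentiable_const _, differentiable_const _, by simp, by simp, by simp⟩

theorem Cub.sum {n : ℕ} {ι : Type} (t : Finset ι) {M : ι → ℝ} {f : ι → Cn n → ℝ} (hf : ∀ i ∈ t, Cub (M i) (f i)) :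
    Cub (∑ i ∈ t, M i) (fun h => ∑ i ∈ t, f i h) := by
  classical
  induction t using Finset.induction_on with
  | empty => simpa using Cub.zero
  | insert a t ha ih =>
    simp only [Finset.sum_insert ha]
    exact (hf a (Finset.mem_insert_self _ _)).add (ih fun i hi => hf i (Finset.mem_insert_of_mem hi))

theorem Cub.hol {n : ℕ} {M : ℝ} (v : ℂ) (hv : ‖v‖ ≤ M) (i j k : Fin n) :
    Cub M (fun h : Cn n => (v * (h i * h j * h k)).re) := by
  refine ⟨fun h => v * (h i * h j * h k), fun _ => 0, by fun_prop, differentiable_const _, fun h => ?_, fun h => ?_,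
    fun h => by simp⟩
  · have h1 := PiLp.norm_apply_le h i
    have h2 := PiLp.norm_apply_le h j
    have h3 := PiLp.norm_apply_le h k
    rw [norm_mul, norm_mul, norm_mul]
    calc ‖v‖ * (‖h i‖ * ‖h j‖ * ‖h k‖) ≤ M * (‖h‖ * ‖h‖ * ‖h‖) := by
          have := (norm_nonneg v).trans hv
          gcongr
      _ = _ := by ring
  · have := (norm_nonneg v).trans hv
    simp; positivity

theorem Cub.anti {n : ℕ} {M : ℝ} (v : ℂ) (hv : ‖v‖ ≤ M) (i j k : Fin n) :
    Cub M (fun h : Cn n => (v * (h i * h j * (starRingEnd ℂ) (h k))).re) := by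
  have hM := (norm_nonneg v).trans hv
  refine ⟨fun _ => 0, fun h => (v / 2 * (h i * h j)) • EuclideanSpace.single k (1:ℂ), differentiable_const _, by fun_prop,
    fun h => ?_, fun h => ?_, fun h => ?_⟩
  · simp; positivity
  · have h1 := PiLp.norm_apply_le h i
    have h2 := PiLp.norm_apply_le h j
    rw [norm_smul, norm_mul, norm_mul, norm_div]
    simp only [PiLp.norm_single, norm_one, mul_one, Complex.norm_ofNat]
    calc ‖v‖ / 2 * (‖h i‖ * ‖h j‖) ≤ M * (‖h‖ * ‖h‖) := by
          gcongr
          have := norm_nonneg v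
          linarith
      _ = _ := by ring
  · rw [inner_smul_right, EuclideanSpace.inner_single_right]
    have : ∀ a b : ℂ, (0:ℂ).re + 2 * a.re = (2 * a).re := by simp
    rw [this _ 0]
    simp
    ring

theorem Cub.prod {n : ℕ} {M r : ℝ} (hr : |r| ≤ M) {u1 u2 u3 : ℂ} (h1 : ‖u1‖ ≤ 1) (h2 : ‖u2‖ ≤ 1) (h3 : ‖u3‖ ≤ 1)
    (i j k : Fin n) :
    Cub (4 * M) (fun h : Cn n => r * ((u1 * h i).re * (u2 * h j).re * (u3 * h k).re)) := by
  have hM := (abs_nonneg r).trans hr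
  have key : ∀ a b c : ℂ, ‖a‖ ≤ 1 → ‖b‖ ≤ 1 → ‖c‖ ≤ 1 → ‖((r / 4 : ℝ) : ℂ) * (a * b * c)‖ ≤ M := by
    intro a b c ha hb hc
    rw [norm_mul, norm_mul, norm_mul, Complex.norm_real, Real.norm_eq_abs, abs_div]
    have : ‖a‖ * ‖b‖ * ‖c‖ ≤ 1 * 1 * 1 := by gcongr
    have h4 : |r| / |4| ≤ M := by
      rw [abs_of_pos (by norm_num : (0:ℝ) < 4)]; linarith
    calc _ ≤ M * (1 * 1 * 1) := by gcongr
      _ = M := by ring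
  have s1 : ‖(starRingEnd ℂ) u1‖ ≤ 1 := by rwa [RCLike.norm_conj]
  have s2 : ‖(starRingEnd ℂ) u2‖ ≤ 1 := by rwa [RCLike.norm_conj]
  have s3 : ‖(starRingEnd ℂ) u3‖ ≤ 1 := by rwa [RCLike.norm_conj]
  have := (((Cub.hol _ (key u1 u2 u3 h1 h2 h3) i j k).add (Cub.anti _ (key u1 u2 _ h1 h2 s3) i j k)).add
    (Cub.anti _ (key u1 u3 _ h1 h3 s2) i k j)).add (Cub.anti _ (key u2 u3 _ h2 h3 s1) j k i)
  have e4 : M + M + M + M = 4 * M := by ring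
  rw [e4] at this
  convert this using 2 with h
  simp only [Complex.mul_re, Complex.mul_im, Complex.conj_re, Complex.conj_im, Complex.ofReal_re, Complex.ofReal_im]
  ring

/-- the real coordinate decomposition -/
def uu (b : Bool) : ℂ := if b then 1 else -Complex.I
def ee {n : ℕ} (x : Fin n × Bool) : Cn n := if x.2 then EuclideanSpace.single x.1 1 else EuclideanSpace.single x.1 Complex.I

theorem norm_uu (b : Bool) : ‖uu b‖ ≤ 1 := by cases b <;> simp [uu]
theorem norm_ee {n : ℕ} (x : Fin n × Bool) : ‖(ee x : Cn n)‖ ≤ 1 := by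
  obtain ⟨x, b⟩ := x
  cases b <;> simp [ee]

theorem real_decomp {n : ℕ} (h : Cn n) : h = ∑ x : Fin n × Bool, (uu x.2 * h x.1).re • (ee x : Cn n) := by
  rw [Fintype.sum_prod_type]
  ext j
  simp only [Fintype.sum_bool, uu, ee]
  simp [Finset.sum_add_distrib, Pi.single_apply]
  
/-- real trilinear forms -/
abbrev Tri (E : Type) [NormedAddCommGroup E] [NormedSpace ℝ E] := E →L[ℝ] E →L[ℝ] E →L[ℝ] ℝ
/-- real bilinear forms -/
abbrev Bil (E : Type) [NormedAddCommGroup E] [NormedSpace ℝ E] := E →L[ℝ] E →L[ℝ] ℝ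

theorem tri_norm {E : Type} [NormedAddCommGroup E] [NormedSpace ℝ E] (T : Tri E) {x y w : E}
    (a1 : ‖x‖ ≤ 1) (a2 : ‖y‖ ≤ 1) (a3 : ‖w‖ ≤ 1) : |T x y w| ≤ ‖T‖ := by
  have h2 := (T x y).le_opNorm w
  have h3 := (T x).le_opNorm y
  have h4 := T.le_opNorm x
  rw [Real.norm_eq_abs] at h2
  calc _ ≤ _ := h2
    _ ≤ ‖T‖ * 1 * 1 * 1 := by
      gcongr
      refine h3.trans ?_
      gcongr
      refine h4.trans ?_
      gcongr
    _ = ‖T‖ := by ring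

theorem tri_sum {E : Type} [NormedAddCommGroup E] [NormedSpace ℝ E] {ι : Type} [Fintype ι] (T : Tri E) (a : ι → ℝ)
    (e : ι → E) : T (∑ x, a x • e x) (∑ x, a x • e x) (∑ x, a x • e x) =
      ∑ x, ∑ y, ∑ w, T (e x) (e y) (e w) * (a x * a y * a w) := by
  simp only [map_sum, map_smul, _root_.sum_apply, _root_.smul_apply, smul_eq_mul, Finset.mul_sum]
  rw [Finset.sum_comm]
  conv_lhs => enter [2, y]; rw [Finset.sum_comm]
  rw [Finset.sum_comm]
  refine Finset.sum_congr rfl fun x _ => Finset.sum_congr rfl fun y _ => Finset.sum_congr rfl fun w _ => ?_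
  ring

theorem cubic (n : ℕ) : ∃ M0 : ℝ, 0 ≤ M0 ∧ ∀ T : Tri (Cn n), Cub (M0 * ‖T‖) (fun h => T h h h) := by
  refine ⟨∑ x : Fin n × Bool, ∑ y : Fin n × Bool, ∑ w : Fin n × Bool, 4, by positivity, fun T => ?_⟩
  have h1 : ∀ h, T h h h = ∑ x : Fin n × Bool, ∑ y : Fin n × Bool, ∑ w : Fin n × Bool,
      T (ee x) (ee y) (ee w) * ((uu x.2 * h x.1).re * (uu y.2 * h y.1).re * (uu w.2 * h w.1).re) := by
    intro h
    have h2 := tri_sum T (fun x : Fin n × Bool => (uu x.2 * h x.1).re) ee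
    rw [← real_decomp h] at h2
    exact h2
  simp_rw [h1, Finset.sum_mul]
  refine Cub.sum _ fun x _ => Cub.sum _ fun y _ => Cub.sum _ fun w _ => ?_
  refine Cub.prod ?_ (norm_uu _) (norm_uu _) (norm_uu _) _ _ _
  exact tri_norm T (norm_ee x) (norm_ee y) (norm_ee w)

end KL

namespace KL
open Filter Topology
set_option maxSynthPendingDepth 3

theorem exists_sqrt {E : Type} [NormedAddCommGroup E] [InnerProductSpace ℂ E] [CompleteSpace E] (T : E →L[ℂ] E)
    (hT : T.IsPositive) : ∃ R : E →L[ℂ] E, R * R = T ∧ R.IsPositive := by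
  have hT0 : 0 ≤ T := (ContinuousLinearMap.nonneg_iff_isPositive T).2 hT
  exact ⟨CFC.sqrt T, CFC.sqrt_mul_sqrt_self T hT0, (ContinuousLinearMap.nonneg_iff_isPositive _).1 (CFC.sqrt_nonneg T)⟩

section LA
variable {E : Type} [NormedAddCommGroup E] [InnerProductSpace ℂ E] [NormedSpace ℝ E] [IsScalarTower ℝ ℂ E]

theorem csm (c : ℂ) (x : E) : c • x = c.re • x + c.im • (Complex.I • x) := by
  have h1 : ∀ r : ℝ, ∀ y : E, r • y = (r : ℂ) • y := fun r y => by
    rw [← one_smul ℂ y, ← smul_assoc, ← smul_assoc]; simp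
  rw [h1, h1, ← mul_smul, ← add_smul, Complex.re_add_im]

theorem csmI (c : ℂ) (x : E) : Complex.I • (c • x) = c.re • (Complex.I • x) - c.im • x := by
  rw [smul_comm, csm c, ← mul_smul Complex.I, Complex.I_mul_I, neg_one_smul, smul_neg]; abel

def ell (A : E →L[ℝ] ℝ) (x : E) : ℂ := (((A x : ℝ) : ℂ) - Complex.I * ((A (Complex.I • x) : ℝ) : ℂ)) / 2

def lv (B : Bil E) (x : E) : ℝ := -((B x x + B (Complex.I • x) (Complex.I • x)) / 4)

theorem nI (x : E) : ‖Complex.I • x‖ = ‖x‖ := by rw [norm_smul]; simp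

theorem ell_norm (A : E →L[ℝ] ℝ) (x : E) : ‖ell A x‖ ≤ ‖A‖ * ‖x‖ := by
  have h1 := A.le_opNorm x
  have h2 := A.le_opNorm (Complex.I • x)
  rw [nI] at h2
  rw [ell, norm_div]
  have h3 := norm_sub_le ((A x : ℝ) : ℂ) (Complex.I * ((A (Complex.I • x) : ℝ) : ℂ))
  rw [norm_mul, Complex.norm_I, Complex.norm_real, Complex.norm_real, one_mul] at h3
  rw [Complex.norm_ofNat]
  linarith

theorem ell_re (A : E →L[ℝ] ℝ) (x : E) : 2 * (ell A x).re = A x := by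
  simp [ell]; ring

def ellC (A : E →L[ℝ] ℝ) : E →L[ℂ] ℂ :=
  LinearMap.mkContinuous
    { toFun := ell A
      map_add' := fun x y => by simp only [ell, smul_add, map_add]; push_cast; ring
      map_smul' := fun c x => by
        simp only [ell, csmI]
        rw [csm]
        simp only [map_add, map_sub, map_smul, RingHom.id_apply, smul_eq_mul]
        apply Complex.ext <;> simp <;> ring } ‖A‖ (ell_norm A)

theorem ellC_apply (A : E →L[ℝ] ℝ) (x : E) : ellC A x = ell A x := rfl

theorem bil_norm {F : Type} [NormedAddCommGroup F] [NormedSpace ℝ F] (B : Bil F) (x y : F) : |B x y| ≤ ‖B‖ * ‖x‖ * ‖y‖ := B.le_opNorm₂ x y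

def qf (B : Bil E) (x y : E) : ℂ := (((B x y - B (Complex.I • x) (Complex.I • y) : ℝ) : ℂ) -
  Complex.I * ((B x (Complex.I • y) + B (Complex.I • x) y : ℝ) : ℂ)) / 4

def sf (B : Bil E) (x y : E) : ℂ := -(((B x y + B (Complex.I • x) (Complex.I • y) : ℝ) : ℂ) -
  Complex.I * ((B x (Complex.I • y) - B (Complex.I • x) y : ℝ) : ℂ)) / 4

theorem four_bd {a b c d M : ℝ} (ha : |a| ≤ M) (hb : |b| ≤ M) (hc : |c| ≤ M) (hd : |d| ≤ M) :
    ‖(((a + b : ℝ) : ℂ) - Complex.I * ((c + d : ℝ) : ℂ)) / 4‖ ≤ M := by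
  rw [norm_div]
  have h3 := norm_sub_le ((a + b : ℝ) : ℂ) (Complex.I * ((c + d : ℝ) : ℂ))
  rw [norm_mul, Complex.norm_I, Complex.norm_real, Complex.norm_real, one_mul, Real.norm_eq_abs, Real.norm_eq_abs] at h3
  rw [Complex.norm_ofNat]
  have := abs_add_le a b
  have := abs_add_le c d
  linarith

theorem qf_norm (B : Bil E) (x y : E) : ‖qf B x y‖ ≤ ‖B‖ * ‖x‖ * ‖y‖ := by
  have h1 := bil_norm B x y
  have h2 := bil_norm B (Complex.I • x) (Complex.I • y)
  have h3 := bil_norm B x (Complex.I • y)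
  have h4 := bil_norm B (Complex.I • x) y
  rw [nI] at h2 h3 h4
  rw [nI] at h2
  rw [qf, sub_eq_add_neg (B x y)]
  exact four_bd h1 (by rwa [abs_neg]) h3 h4

theorem sf_norm (B : Bil E) (x y : E) : ‖sf B x y‖ ≤ ‖B‖ * ‖x‖ * ‖y‖ := by
  have h1 := bil_norm B x y
  have h2 := bil_norm B (Complex.I • x) (Complex.I • y)
  have h3 := bil_norm B x (Complex.I • y)
  have h4 := bil_norm B (Complex.I • x) y
  rw [nI] at h2 h3 h4
  rw [nI] at h2
  rw [sf, sub_eq_add_neg (B x _), neg_div, norm_neg]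
  exact four_bd h1 h2 h3 (by rwa [abs_neg])

def qC (B : Bil E) : E →L[ℂ] E →L[ℂ] ℂ :=
  LinearMap.mkContinuous₂ (LinearMap.mk₂ ℂ (qf B)
    (fun x x' y => by simp only [qf, smul_add, map_add, _root_.add_apply]; push_cast; ring)
    (fun c x y => by
      simp only [qf, csmI]
      rw [csm c x]
      simp only [map_add, map_sub, map_smul, _root_.add_apply, _root_.sub_apply, _root_.smul_apply, smul_eq_mul]
      apply Complex.ext <;> simp <;> ring)
    (fun x y y' => by simp only [qf, smul_add, map_add]; push_cast; ring)
    (fun c x y => by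
      simp only [qf, csmI]
      rw [csm c y]
      simp only [map_add, map_sub, map_smul, smul_eq_mul]
      apply Complex.ext <;> simp <;> ring)) ‖B‖ (qf_norm B)

theorem qC_apply (B : Bil E) (x y : E) : qC B x y = qf B x y := rfl

def sC (B : Bil E) : E →L⋆[ℂ] E →L[ℂ] ℂ :=
  LinearMap.mkContinuous₂ (LinearMap.mk₂'ₛₗ (starRingEnd ℂ) (RingHom.id ℂ) (sf B)
    (fun x x' y => by simp only [sf, smul_add, map_add, _root_.add_apply]; push_cast; ring)
    (fun c x y => by
      simp only [sf, csmI]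
      rw [csm c x]
      simp only [map_add, map_sub, map_smul, _root_.add_apply, _root_.sub_apply, _root_.smul_apply, smul_eq_mul]
      apply Complex.ext <;> simp <;> ring)
    (fun x y y' => by simp only [sf, smul_add, map_add]; push_cast; ring)
    (fun c x y => by
      simp only [sf, csmI]
      rw [csm c y]
      simp only [map_add, map_sub, map_smul, smul_eq_mul]
      apply Complex.ext <;> simp <;> ring)) ‖B‖ (sf_norm B)

theorem sC_apply (B : Bil E) (x y : E) : sC B x y = sf B x y := rfl

theorem sf_self {B : Bil E} (hB : ∀ x y, B x y = B y x) (x : E) : sf B x x = (lv B x : ℂ) := by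
  rw [sf, lv, hB x (Complex.I • x)]
  push_cast
  ring

theorem q_lv (B : Bil E) (x : E) : (1 / 2 : ℝ) * B x x = (qf B x x).re - lv B x := by
  simp [qf, lv]
  ring

variable [FiniteDimensional ℂ E]

theorem sqrtR {B : Bil E} (hB : ∀ x y, B x y = B y x) (A : E →L[ℝ] ℝ) {K c : ℝ} (hc : 0 < c)
    (hpos : ∀ x, c * ‖x‖ ^ 2 ≤ lv B x + K * ‖ell A x‖ ^ 2) :
    ∃ R Ri : E →L[ℂ] E, (∀ x, ‖R x‖ ^ 2 = lv B x + K * ‖ell A x‖ ^ 2) ∧ (∀ x y, inner ℂ (R x) (Ri y) = inner ℂ x y) ∧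
      ∀ y, c * ‖Ri y‖ ^ 2 ≤ ‖y‖ ^ 2 := by
  have : CompleteSpace E := FiniteDimensional.complete ℂ E
  let T : E →L[ℂ] E := InnerProductSpace.continuousLinearMapOfBilin (sC B) +
    (K : ℂ) • (ContinuousLinearMap.adjoint (ellC A) ∘L ellC A)
  have hT : ∀ x, inner ℂ (T x) x = ((lv B x + K * ‖ell A x‖ ^ 2 : ℝ) : ℂ) := by
    intro x
    simp only [T, _root_.add_apply, _root_.smul_apply, inner_add_left, inner_smul_left,
      InnerProductSpace.continuousLinearMapOfBilin_apply, ContinuousLinearMap.comp_apply,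
      ContinuousLinearMap.adjoint_inner_left, sC_apply, sf_self hB, ellC_apply, inner_self_eq_norm_sq_to_K]
    simp
  have hTpos : T.IsPositive := by
    rw [ContinuousLinearMap.isPositive_iff_complex]
    intro x
    rw [hT]
    refine ⟨by rw [RCLike.re_eq_complex_re, Complex.ofReal_re], ?_⟩
    rw [RCLike.re_eq_complex_re, Complex.ofReal_re]
    have := hpos x
    have h2 : 0 ≤ c * ‖x‖ ^ 2 := by positivity
    exact h2.trans this
  obtain ⟨R, hRR, hRp⟩ := exists_sqrt T hTpos
  have hsym : ∀ x y, inner ℂ (R x) y = inner ℂ x (R y) := fun x y => hRp.isSymmetric x y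
  have hR : ∀ x, ‖R x‖ ^ 2 = lv B x + K * ‖ell A x‖ ^ 2 := by
    intro x
    have h1 : inner ℂ (R x) (R x) = inner ℂ (T x) x := by
      rw [← hRR]; exact (hsym (R x) x).symm
    rw [hT, inner_self_eq_norm_sq_to_K] at h1
    apply Complex.ofReal_injective
    rw [← h1]
    simp
  have hinj : Function.Injective (R : E →ₗ[ℂ] E) := by
    rw [injective_iff_map_eq_zero]
    intro x hx
    have h1 := hpos x
    rw [← hR x, show R x = 0 from hx] at h1
    simp at h1
    by_contra h0
    have : 0 < c * ‖x‖ ^ 2 := by have := norm_pos_iff.2 h0; positivity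
    linarith
  let e := LinearEquiv.ofInjectiveEndo (R : E →ₗ[ℂ] E) hinj
  let Ri : E →L[ℂ] E := LinearMap.toContinuousLinearMap (e.symm : E →ₗ[ℂ] E)
  have hRi : ∀ y, R (Ri y) = y := fun y => e.apply_symm_apply y
  refine ⟨R, Ri, hR, fun x y => ?_, fun y => ?_⟩
  · rw [hsym, hRi]
  · have := hpos (Ri y)
    rwa [← hR, hRi] at this
end LA

end KL

namespace KL
open Filter Topology
set_option maxSynthPendingDepth 3

theorem err_arith {e r a b t t4 u M N N2 K C : ℝ} (hr : |r| ≤ M * u) (hK : 0 ≤ K)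
    (ht4 : t4 ≤ u) (ht40 : 0 ≤ t4) (hu : 0 ≤ u) (b0 : 0 ≤ b) (hb : b ^ 2 ≤ N2 ^ 2 * t4)
    (ha : 0 ≤ a) (ht : 0 ≤ t) (hN : 0 ≤ N)
    (hdiff : |e| ≤ 2 * N * (a * t) + N ^ 2 * t4) (hC1 : M + N2 ^ 2 + K * N ^ 2 ≤ C) (hC2 : K * (2 * N) ≤ C) :
    |r + b ^ 2 + K * e| ≤ C * (u + a * t) := by
  have h1 : |r + b ^ 2 + K * e| ≤ |r| + b ^ 2 + K * |e| := by
    refine (abs_add_le _ _).trans ?_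
    rw [abs_mul, abs_of_nonneg hK]
    have := abs_add_le r (b ^ 2)
    rw [abs_of_nonneg (sq_nonneg b)] at this
    linarith
  have h2 : K * |e| ≤ K * (2 * N * (a * t) + N ^ 2 * u) := by
    apply mul_le_mul_of_nonneg_left _ hK
    have := mul_le_mul_of_nonneg_left ht4 (sq_nonneg N)
    linarith
  have h3 := mul_le_mul_of_nonneg_left ht4 (sq_nonneg N2)
  have h4 := mul_le_mul_of_nonneg_right hC1 hu
  have h5 := mul_le_mul_of_nonneg_right hC2 (mul_nonneg ha ht)
  linarith

theorem sq_diff {x y : ℂ} {N t2 : ℝ} (hN : 0 ≤ N) (ht : 0 ≤ t2) (h : ‖x - y‖ ≤ N * t2) :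
    |‖y‖ ^ 2 - ‖x‖ ^ 2| ≤ 2 * N * (‖x‖ * t2) + N ^ 2 * t2 ^ 2 := by
  have h1 : |‖y‖ - ‖x‖| ≤ N * t2 := by rw [abs_sub_comm]; exact (abs_norm_sub_norm_le _ _).trans h
  have h2 : ‖y‖ ^ 2 - ‖x‖ ^ 2 = (‖y‖ - ‖x‖) * (‖y‖ - ‖x‖ + 2 * ‖x‖) := by ring
  rw [h2, abs_mul]
  have h3 : |‖y‖ - ‖x‖ + 2 * ‖x‖| ≤ N * t2 + 2 * ‖x‖ := by
    refine (abs_add_le _ _).trans ?_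
    rw [abs_of_nonneg (by positivity : 0 ≤ 2 * ‖x‖)]
    linarith
  calc _ ≤ (N * t2) * (N * t2 + 2 * ‖x‖) := mul_le_mul h1 h3 (abs_nonneg _) (by positivity)
    _ = _ := by ring

theorem fderiv_zero_of_sq {E F : Type} [NormedAddCommGroup E] [NormedSpace ℂ E] [NormedAddCommGroup F] [NormedSpace ℂ F]
    {f : E → F} {M : ℝ} {m : ℕ} (hm : 2 ≤ m) (h : ∀ x, ‖f x‖ ≤ M * ‖x‖ ^ m) : HasFDerivAt f (0 : E →L[ℂ] F) 0 := by
  have h0 : f 0 = 0 := by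
    have := h 0
    rw [norm_zero, zero_pow (by omega), mul_zero] at this
    exact norm_le_zero_iff.1 this
  rw [hasFDerivAt_iff_isLittleO_nhds_zero]
  have h1 : (fun x => f x) =O[𝓝 0] fun x : E => ‖x‖ ^ m := by
    refine Asymptotics.IsBigO.of_bound M (Eventually.of_forall fun x => ?_)
    rw [norm_pow, norm_norm]; exact h x
  have h2 := h1.trans_isLittleO (Asymptotics.isLittleO_norm_pow_id (by omega : 1 < m))
  simpa [h0] using h2

set_option maxHeartbeats 1000000 in
theorem local_data (n : ℕ) {M c K τ : ℝ} (hM : 0 ≤ M) (hc : 0 < c) (hK : 0 ≤ K) (hτ : 0 < τ) (hτ2 : τ ≤ 2) :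
    ∃ C c' ρ0 : ℝ, 0 < C ∧ 0 < c' ∧ c' ≤ 1 ∧ 0 < ρ0 ∧ ∀ (A : Cn n →L[ℝ] ℝ) (B : Bil (Cn n)) (T : Tri (Cn n)),
      ‖A‖ ≤ M → ‖B‖ ≤ M → ‖T‖ ≤ M → (∀ x y, B x y = B y x) → (∀ x, c * ‖x‖ ^ 2 ≤ lv B x + K * ‖ell A x‖ ^ 2) →
      ∀ z : Cn n, ∃ (s : Cn n → ℂ) (g : Cn n → Cn n), Differentiable ℂ s ∧ Differentiable ℂ g ∧ s z = 0 ∧ g z = 0 ∧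
        (∀ X, fderiv ℂ s z X = ell A X) ∧ (∀ X, ‖fderiv ℂ g z X‖ ^ 2 = lv B X + K * ‖ell A X‖ ^ 2) ∧
        ∀ w, dist w z ≤ ρ0 → ∀ d0 dw : ℝ,
          |dw - (d0 + A (w - z) + (1 / 2 : ℝ) * B (w - z) (w - z) + T (w - z) (w - z) (w - z))| ≤ M * dist w z ^ (2 + τ) →
          |dw - (d0 + 2 * (s w).re - ‖g w‖ ^ 2 + K * ‖s w‖ ^ 2)| ≤ C * (dist w z ^ (2 + τ) + ‖s w‖ * dist w z ^ 2) ∧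
          c' * dist w z ^ 2 ≤ ‖g w‖ ^ 2 ∧ ‖g w‖ ≤ C * dist w z ∧ ‖s w‖ ≤ C * dist w z := by
  obtain ⟨M0, hM0, hcub⟩ := cubic n
  obtain ⟨M1, hM1⟩ : ∃ x : ℝ, x = M0 * M := ⟨_, rfl⟩
  have hM1n : 0 ≤ M1 := by rw [hM1]; positivity
  obtain ⟨N, hN⟩ : ∃ x : ℝ, x = M + M1 := ⟨_, rfl⟩
  have hNn : 0 ≤ N := by rw [hN]; positivity
  obtain ⟨q, hq⟩ : ∃ x : ℝ, x = Real.sqrt c := ⟨_, rfl⟩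
  have hqp : 0 < q := by rw [hq]; exact Real.sqrt_pos.2 hc
  have hq2 : q ^ 2 = c := by rw [hq]; exact Real.sq_sqrt hc.le
  obtain ⟨N2, hN2⟩ : ∃ x : ℝ, x = M1 / q := ⟨_, rfl⟩
  have hN2n : 0 ≤ N2 := by rw [hN2]; positivity
  obtain ⟨P, hP⟩ : ∃ x : ℝ, x = 1 + M + K * M ^ 2 := ⟨_, rfl⟩
  have hP1 : 1 ≤ P := by rw [hP]; have : 0 ≤ K * M ^ 2 := by positivity
                         linarith
  obtain ⟨C, hC⟩ : ∃ x : ℝ, x = (M + N2 ^ 2 + K * N ^ 2) + K * (2 * N) + (P + N2) + (M + N) := ⟨_, rfl⟩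
  have a1 : 0 ≤ M + N2 ^ 2 + K * N ^ 2 := by positivity
  have a2 : 0 ≤ K * (2 * N) := by positivity
  refine ⟨C, min 1 (c / 4), min 1 (q / (2 * (N2 + 1))), by rw [hC]; linarith, by positivity, min_le_left _ _, by positivity, ?_⟩
  intro A B T hA hB hT hsym hpos z
  obtain ⟨cc, β, hcd, hβd, hcn, hβn, hTe⟩ := hcub T
  obtain ⟨R, Ri, hR, hRi, hRin⟩ := sqrtR hsym A hc hpos
  have hMT : M0 * ‖T‖ ≤ M1 := by rw [hM1]; gcongr
  have hcn' : ∀ h, ‖cc h‖ ≤ M1 * ‖h‖ ^ 3 := fun h => (hcn h).trans (by gcongr)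
  have hβn' : ∀ h, ‖β h‖ ≤ M1 * ‖h‖ ^ 2 := fun h => (hβn h).trans (by gcongr)
  have hRib : ∀ h, ‖Ri (β h)‖ ≤ N2 * ‖h‖ ^ 2 := by
    intro h
    rw [hN2, div_mul_eq_mul_div, le_div_iff₀ hqp]
    refine le_trans ?_ (hβn' h)
    have := hRin (β h)
    rw [← hq2, ← mul_pow] at this
    rw [mul_comm]
    exact le_of_sq_le_sq this (norm_nonneg _)
  have hqd : Differentiable ℂ (fun h => qf B h h) := fun h =>
    ((qC B).hasFDerivAt_of_bilinear (hasFDerivAt_id h) (hasFDerivAt_id h)).differentiableAt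
  let S : Cn n → ℂ := fun h => ellC A h + (qf B h h * (2:ℂ)⁻¹ + cc h * (2:ℂ)⁻¹)
  let Gg : Cn n → Cn n := fun h => R h - Ri (β h)
  have hSd : Differentiable ℂ S := (ellC A).differentiable.add ((hqd.mul_const _).add (hcd.mul_const _))
  have hGd : Differentiable ℂ Gg := R.differentiable.sub (Ri.differentiable.comp hβd)
  have hsub : Differentiable ℂ (fun w : Cn n => w - z) := differentiable_id.sub_const z
  have hβ0 : β 0 = 0 := by simpa using hβn' 0
  have hc0 : cc 0 = 0 := by simpa using hcn' 0
  have hq0 : qf B 0 0 = 0 := by simp [qf]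
  have hS0 : HasFDerivAt S (ellC A) 0 := by
    have h1 : HasFDerivAt (fun h => qf B h h) (0 : Cn n →L[ℂ] ℂ) 0 :=
      fderiv_zero_of_sq (m := 2) (M := ‖B‖) le_rfl fun x => (qf_norm B x x).trans_eq (by ring)
    have h2 : HasFDerivAt cc (0 : Cn n →L[ℂ] ℂ) 0 := fderiv_zero_of_sq (by norm_num) hcn'
    have h3 := (ellC A).hasFDerivAt (x := 0) |>.add ((h1.mul_const (2:ℂ)⁻¹).add (h2.mul_const (2:ℂ)⁻¹))
    exact h3.congr_fderiv (by simp)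
  have hG0 : HasFDerivAt Gg R 0 := by
    have h2 : HasFDerivAt (fun h => Ri (β h)) (0 : Cn n →L[ℂ] Cn n) 0 := fderiv_zero_of_sq le_rfl hRib
    exact (R.hasFDerivAt (x := 0) |>.sub h2).congr_fderiv (by simp)
  have hsz : HasFDerivAt (fun w : Cn n => w - z) (ContinuousLinearMap.id ℂ (Cn n)) z := (hasFDerivAt_id z).sub_const z
  have hS1 : HasFDerivAt (fun w => S (w - z)) (ellC A) z := by
    have := HasFDerivAt.comp (g := S) (g' := ellC A) z (by rw [sub_self]; exact hS0) hsz
    exact this.congr_fderiv (by simp)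
  have hG1 : HasFDerivAt (fun w => Gg (w - z)) R z := by
    have := HasFDerivAt.comp (g := Gg) (g' := R) z (by rw [sub_self]; exact hG0) hsz
    exact this.congr_fderiv (by simp)
  refine ⟨fun w => S (w - z), fun w => Gg (w - z), hSd.comp hsub, hGd.comp hsub, ?_, ?_, ?_, ?_, ?_⟩
  · simp [S, hq0, hc0]
  · simp [Gg, hβ0]
  · intro X; rw [hS1.fderiv]; rfl
  · intro X; rw [hG1.fderiv]; exact hR X
  intro w hw d0 dw hdw
  have hd : dist w z = ‖w - z‖ := dist_eq_norm _ _
  rw [hd] at hw hdw ⊢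
  beta_reduce
  generalize w - z = h at hw hdw ⊢
  obtain ⟨t, ht⟩ : ∃ x : ℝ, x = ‖h‖ := ⟨_, rfl⟩
  have ht0 : 0 ≤ t := by rw [ht]; exact norm_nonneg _
  have e1 := ell_norm A h
  have e2 := qf_norm B h h
  have e3 := hcn' h
  have e4 := hRib h
  have e5 := hR h
  have e6 := hpos h
  have e7 := bil_norm B h h
  have e8 := bil_norm B (Complex.I • h) (Complex.I • h)
  rw [nI] at e8
  rw [← ht] at hw hdw e1 e2 e3 e4 e6 e7 e8 ⊢
  have ht1 : t ≤ 1 := hw.trans (min_le_left _ _)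
  have htq : N2 * t ≤ q / 2 := by
    have h1 := hw.trans (min_le_right _ _)
    rw [le_div_iff₀ (by positivity)] at h1
    linarith
  have ht2 : t ^ 2 ≤ t := by rw [sq]; exact mul_le_of_le_one_left ht0 ht1
  have ht3 : t ^ 3 ≤ t ^ 2 := pow_le_pow_of_le_one ht0 ht1 (by norm_num)
  have hBt : ‖B‖ * t * t ≤ M * t ^ 2 := by rw [mul_assoc, ← sq]; gcongr
  have hAt : ‖A‖ * t ≤ M * t := by gcongr
  have hℓ : ‖ell A h‖ ≤ M * t := e1.trans hAt
  have hsl : ‖S h - ell A h‖ ≤ N * t ^ 2 := by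
    have h1 : S h - ell A h = qf B h h / 2 + cc h / 2 := by simp only [S, ellC_apply]; ring
    rw [h1]
    have h2 := norm_add_le (qf B h h / 2) (cc h / 2)
    rw [norm_div, norm_div, Complex.norm_ofNat] at h2
    have h3 : M1 * t ^ 3 ≤ M1 * t ^ 2 := by gcongr
    have h4 : 0 ≤ M * t ^ 2 := by positivity
    have h5 : 0 ≤ M1 * t ^ 2 := by positivity
    rw [hN, add_mul]
    linarith
  have hSn : ‖S h‖ ≤ (M + N) * t := by
    have h1 : ‖S h‖ ≤ ‖S h - ell A h‖ + ‖ell A h‖ := by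
      simpa using norm_add_le (S h - ell A h) (ell A h)
    have h2 : N * t ^ 2 ≤ N * t := by gcongr
    rw [add_mul]; linarith
  have hRn : ‖R h‖ ≤ P * t := by
    refine le_of_sq_le_sq ?_ (by positivity)
    rw [e5]
    have h1 : lv B h ≤ M * t ^ 2 := by
      rw [lv]
      have := neg_abs_le (B h h)
      have := neg_abs_le (B (Complex.I • h) (Complex.I • h))
      have h4 : 0 ≤ M * t ^ 2 := by positivity
      linarith
    have h2 : K * ‖ell A h‖ ^ 2 ≤ K * (M * t) ^ 2 := by gcongr
    have h3 : M + K * M ^ 2 ≤ P ^ 2 := by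
      have : P * 1 ≤ P * P := by gcongr
      rw [sq P]; linarith
    have h4 := mul_le_mul_of_nonneg_right h3 (sq_nonneg t)
    rw [mul_pow]
    linarith
  have hRl : q * t ≤ ‖R h‖ := by
    refine le_of_sq_le_sq ?_ (norm_nonneg _)
    rw [e5, mul_pow, hq2]; exact e6
  have hN2t : N2 * t ^ 2 ≤ q / 2 * t := by
    have := mul_le_mul_of_nonneg_right htq ht0
    calc _ = N2 * t * t := by ring
      _ ≤ _ := this
  refine ⟨?_, ?_, ?_, ?_⟩
  · have hg2 : ‖Gg h‖ ^ 2 = lv B h + K * ‖ell A h‖ ^ 2 - 2 * (inner ℂ h (β h)).re + ‖Ri (β h)‖ ^ 2 := by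
      simp only [Gg]
      rw [@norm_sub_sq ℂ, e5, hRi]; rfl
    have hre : 2 * (S h).re = A h + (qf B h h).re + (cc h).re := by
      simp only [S, ellC_apply, Complex.add_re]
      rw [mul_add, ell_re]
      simp
      ring
    have hTh : T h h h = (cc h).re + 2 * (inner ℂ h (β h)).re := hTe h
    have hqv := q_lv B h
    have key : dw - (d0 + 2 * (S h).re - ‖Gg h‖ ^ 2 + K * ‖S h‖ ^ 2) =
      (dw - (d0 + A h + (1 / 2 : ℝ) * B h h + T h h h)) + ‖Ri (β h)‖ ^ 2 + K * (‖ell A h‖ ^ 2 - ‖S h‖ ^ 2) := by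
      rw [hg2, hre, hqv, hTh]; ring
    rw [key]
    refine err_arith (t4 := t ^ 4) (N := N) (N2 := N2) hdw hK ?_ (by positivity) (by positivity) (norm_nonneg _) ?_ (norm_nonneg _)
      (by positivity) hNn ?_ (by linarith) (by linarith)
    · rcases ht0.eq_or_lt with h0 | h0
      · rw [← h0, Real.zero_rpow (by linarith)]; norm_num
      · rw [← Real.rpow_natCast]
        exact Real.rpow_le_rpow_of_exponent_ge h0 ht1 (by push_cast; linarith)
    · calc ‖Ri (β h)‖ ^ 2 ≤ (N2 * t ^ 2) ^ 2 := by gcongr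
        _ = _ := by ring
    · have := sq_diff hNn (sq_nonneg t) hsl
      rwa [← pow_mul] at this
  · have h1 : ‖R h‖ - ‖Ri (β h)‖ ≤ ‖Gg h‖ := norm_sub_norm_le _ _
    have h2 : q / 2 * t ≤ ‖Gg h‖ := by linarith
    have h3 : min 1 (c / 4) * t ^ 2 ≤ c / 4 * t ^ 2 := by gcongr; exact min_le_right _ _
    calc _ ≤ _ := h3
      _ = (q / 2 * t) ^ 2 := by rw [← hq2]; ring
      _ ≤ _ := by gcongr
  · have h1 : ‖Gg h‖ ≤ ‖R h‖ + ‖Ri (β h)‖ := norm_sub_le _ _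
    have h2 : N2 * t ^ 2 ≤ N2 * t := by gcongr
    have h3 : (P + N2) * t ≤ C * t := by gcongr; linarith
    linarith
  · have h3 : (M + N) * t ≤ C * t := by gcongr; linarith
    exact hSn.trans h3

end KL

namespace KL
open Filter Topology
set_option maxSynthPendingDepth 3

section Pos
variable {E : Type} [NormedAddCommGroup E] [InnerProductSpace ℂ E] [NormedSpace ℝ E] [IsScalarTower ℝ ℂ E]

theorem ell_add (A A' : E →L[ℝ] ℝ) (x : E) : ell (A + A') x = ell A x + ell A' x := by
  simp only [ell, _root_.add_apply]; push_cast; ring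

theorem lv_add (B B' : Bil E) (x : E) : lv (B + B') x = lv B x + lv B' x := by
  simp only [lv, _root_.add_apply]; ring

theorem lv_norm (B : Bil E) (x : E) : |lv B x| ≤ ‖B‖ * ‖x‖ ^ 2 := by
  have e7 := bil_norm B x x
  have e8 := bil_norm B (Complex.I • x) (Complex.I • x)
  rw [nI] at e8
  have h1 := abs_add_le (B x x) (B (Complex.I • x) (Complex.I • x))
  rw [lv, abs_neg, abs_div, abs_of_pos (by norm_num : (0:ℝ) < 4)]
  have h2 : 0 ≤ ‖B‖ * ‖x‖ ^ 2 := by positivity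
  have h3 : ‖B‖ * ‖x‖ * ‖x‖ = ‖B‖ * ‖x‖ ^ 2 := by ring
  linarith

theorem cont_ell (A : E →L[ℝ] ℝ) : Continuous (ell A) := (ellC A).continuous

theorem cont_lv (B : Bil E) : Continuous (lv B) := by
  unfold lv
  have h1 : Continuous (fun x : E => Complex.I • x) := continuous_const_smul _
  have h2 : Continuous (fun x : E => B x x) := B.continuous.clm_apply continuous_id
  have h3 : Continuous (fun x : E => B (Complex.I • x) (Complex.I • x)) := h2.comp h1
  fun_prop

theorem real_smul_c (r : ℝ) (x : E) : r • x = (r : ℂ) • x := by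
  rw [csm]; simp

theorem ell_smul (A : E →L[ℝ] ℝ) (r : ℝ) (x : E) : ell A (r • x) = r * ell A x := by
  rw [real_smul_c, ← ellC_apply, map_smul, ellC_apply, smul_eq_mul]

theorem lv_smul (B : Bil E) (r : ℝ) (x : E) : lv B (r • x) = r ^ 2 * lv B x := by
  have h : Complex.I • (r • x) = r • (Complex.I • x) := by
    rw [real_smul_c, real_smul_c, smul_comm]
  rw [lv, h]
  simp only [map_smul, _root_.smul_apply, smul_eq_mul, lv]
  ring

variable [FiniteDimensional ℂ E]

theorem pos0 (A : E →L[ℝ] ℝ) (B : Bil E) (h : ∀ X, X ≠ 0 → ell A X = 0 → 0 < lv B X) :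
    ∃ K c : ℝ, 0 ≤ K ∧ 0 < c ∧ ∀ x, c * ‖x‖ ^ 2 ≤ lv B x + K * ‖ell A x‖ ^ 2 := by
  have hprop : ProperSpace E := FiniteDimensional.proper ℂ E
  have hcomp : IsCompact (sphere (0:E) 1) := isCompact_sphere _ _
  have h1 : ∃ K : ℝ, 0 ≤ K ∧ ∀ x ∈ sphere (0:E) 1, 0 < lv B x + K * ‖ell A x‖ ^ 2 := by
    refine hcomp.induction_on (p := fun s => ∃ K : ℝ, 0 ≤ K ∧ ∀ x ∈ s, 0 < lv B x + K * ‖ell A x‖ ^ 2) ?_ ?_ ?_ ?_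
    · exact ⟨0, le_rfl, by simp⟩
    · rintro s t hst ⟨K, hK, hs⟩
      exact ⟨K, hK, fun x hx => hs x (hst hx)⟩
    · rintro s t ⟨K, hK, hs⟩ ⟨K', hK', ht⟩
      refine ⟨K + K', by positivity, ?_⟩
      rintro x (hx | hx)
      · have := hs x hx
        have : 0 ≤ K' * ‖ell A x‖ ^ 2 := by positivity
        rw [add_mul]; linarith
      · have := ht x hx
        have : 0 ≤ K * ‖ell A x‖ ^ 2 := by positivity
        rw [add_mul]; linarith
    · intro x hx
      have hx0 : x ≠ 0 := by
        rintro rfl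
        simp at hx
      have h2 : ∃ K : ℝ, 0 ≤ K ∧ 0 < lv B x + K * ‖ell A x‖ ^ 2 := by
        by_cases h0 : ell A x = 0
        · exact ⟨0, le_rfl, by simpa using h x hx0 h0⟩
        · have h3 : 0 < ‖ell A x‖ ^ 2 := by have := norm_pos_iff.2 h0; positivity
          refine ⟨(|lv B x| + 1) / ‖ell A x‖ ^ 2, by positivity, ?_⟩
          rw [div_mul_cancel₀ _ h3.ne']
          have := neg_abs_le (lv B x)
          linarith
      obtain ⟨K, hK, h4⟩ := h2
      have hcont : Continuous (fun x => lv B x + K * ‖ell A x‖ ^ 2) := by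
        have := cont_lv B
        have := cont_ell A
        fun_prop
      refine ⟨{y | 0 < lv B y + K * ‖ell A y‖ ^ 2}, ?_, K, hK, fun y hy => hy⟩
      exact nhdsWithin_le_nhds (hcont.continuousAt.eventually (lt_mem_nhds h4))
  obtain ⟨K, hK, h1⟩ := h1
  have hcont : Continuous (fun x => lv B x + K * ‖ell A x‖ ^ 2) := by
    have := cont_lv B
    have := cont_ell A
    fun_prop
  obtain ⟨c, hc, h2⟩ := hcomp.exists_forall_le' hcont.continuousOn h1
  refine ⟨K, c, hK, hc, fun x => ?_⟩
  by_cases hx : x = 0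
  · subst hx; simp [lv, ell]
  · have hn : 0 < ‖x‖ := norm_pos_iff.2 hx
    have h3 := h2 (‖x‖⁻¹ • x) (by
      rw [mem_sphere_zero_iff_norm, norm_smul, norm_inv, norm_norm, inv_mul_cancel₀ hn.ne'])
    rw [lv_smul, ell_smul, norm_mul, mul_pow, Complex.norm_real, norm_inv, norm_norm] at h3
    have h4 : c ≤ (‖x‖⁻¹) ^ 2 * (lv B x + K * ‖ell A x‖ ^ 2) := by linarith
    rw [inv_pow, inv_mul_eq_div, le_div_iff₀ (by positivity)] at h4
    exact h4

theorem pos_near {Y : Type} [TopologicalSpace Y] {p : Y} {A : Y → E →L[ℝ] ℝ} {B : Y → Bil E} (hA : ContinuousAt A p)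
    (hB : ContinuousAt B p) (h : ∀ X, X ≠ 0 → ell (A p) X = 0 → 0 < lv (B p) X) :
    ∃ K c : ℝ, 0 ≤ K ∧ 0 < c ∧ ∀ᶠ z in 𝓝 p, ∀ x, c * ‖x‖ ^ 2 ≤ lv (B z) x + K * ‖ell (A z) x‖ ^ 2 := by
  obtain ⟨K, c, hK, hc, h0⟩ := pos0 (A p) (B p) h
  refine ⟨2 * K, c / 2, by positivity, by positivity, ?_⟩
  have t1 : Tendsto (fun z => ‖B p - B z‖) (𝓝 p) (𝓝 0) := by
    have : ContinuousAt (fun z => ‖B p - B z‖) p := (continuousAt_const.sub hB).norm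
    simpa [ContinuousAt] using this
  have t2 : Tendsto (fun z => 2 * K * ‖A p - A z‖ ^ 2) (𝓝 p) (𝓝 0) := by
    have : ContinuousAt (fun z => 2 * K * ‖A p - A z‖ ^ 2) p := ((continuousAt_const.sub hA).norm.pow 2).const_mul _
    simpa [ContinuousAt] using this
  filter_upwards [t1.eventually (gt_mem_nhds (by positivity : 0 < c / 4)),
    t2.eventually (gt_mem_nhds (by positivity : 0 < c / 4))] with z h1 h2 x
  have h3 := h0 x
  have e1 : lv (B p) x = lv (B p - B z) x + lv (B z) x := by rw [← lv_add, sub_add_cancel]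
  have e2 : ell (A p) x = ell (A p - A z) x + ell (A z) x := by rw [← ell_add, sub_add_cancel]
  have h4 := (le_abs_self _).trans (lv_norm (B p - B z) x)
  have h5 : ‖ell (A p) x‖ ≤ ‖A p - A z‖ * ‖x‖ + ‖ell (A z) x‖ := by
    rw [e2]; exact (norm_add_le _ _).trans (add_le_add (ell_norm _ _) le_rfl)
  have h6 : ‖ell (A p) x‖ ^ 2 ≤ 2 * (‖A p - A z‖ * ‖x‖) ^ 2 + 2 * ‖ell (A z) x‖ ^ 2 := by
    refine (pow_le_pow_left₀ (norm_nonneg _) h5 2).trans ?_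
    linarith [sq_nonneg (‖A p - A z‖ * ‖x‖ - ‖ell (A z) x‖), add_sq (‖A p - A z‖ * ‖x‖) ‖ell (A z) x‖, sub_sq (‖A p - A z‖ * ‖x‖) ‖ell (A z) x‖]
  have h7 := mul_le_mul_of_nonneg_left h6 hK
  have h8 := mul_le_mul_of_nonneg_right h1.le (sq_nonneg ‖x‖)
  have h9 := mul_le_mul_of_nonneg_right h2.le (sq_nonneg ‖x‖)
  rw [mul_pow] at h7
  linarith
end Pos

theorem levi_eq {n : ℕ} {ρ : Cn n → ℝ} {q : Cn n} (h : DifferentiableAt ℝ (fderiv ℝ ρ) q) (X : Cn n) :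
    leviForm ρ q X = (fderiv ℝ (fderiv ℝ ρ) q X X + fderiv ℝ (fderiv ℝ ρ) q (Complex.I • X) (Complex.I • X)) / 4 := by
  have key : ∀ Y, fderiv ℝ (fun w => fderiv ℝ ρ w Y) q Y = fderiv ℝ (fderiv ℝ ρ) q Y Y := by
    intro Y
    have h1 := h.hasFDerivAt.clm_apply (hasFDerivAt_const Y q)
    rw [h1.fderiv]
    simp
  rw [leviForm, key, key]

theorem cderiv_eq {n : ℕ} (ρ : Cn n → ℝ) (q X : Cn n) : cderiv ρ q X = ell (fderiv ℝ ρ q) X := rfl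

theorem setup {n : ℕ} {ε : ℝ} (hε : 0 < ε) (hε1 : ε ≤ 1) {k : ℕ} {Ω : Set (Cn n)} (hopen : IsOpen Ω) {p : Cn n}
    (hp : IsStrictPscPtHolder Ω p (k + 2) ε) : ∃ d : Cn n → ℝ, HC ε (k + 2) d p ∧
      (∀ᶠ z in 𝓝 p, z ∈ Ω → bdist Ω z = d z ∧ 0 < d z) ∧
      (∀ X, X ≠ 0 → ell (fderiv ℝ d p) X = 0 → 0 < lv (fderiv ℝ (fderiv ℝ d) p) X) := by
  obtain ⟨hpf, W, hW, hpW, ρ, hρ, ⟨C, hC⟩, hΩW, hd, hlev⟩ := hp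
  have hρ' : ∀ q ∈ W, ContDiffAt ℝ ((k + 2 : ℕ) : WithTop ℕ∞) ρ q := fun q hq => hρ.contDiffAt (hW.mem_nhds hq)
  have h1le : (1 : WithTop ℕ∞) ≤ ((k + 2 : ℕ) : WithTop ℕ∞) := by
    exact_mod_cast (by omega : 1 ≤ k + 2)
  have h0 : ρ p = 0 := rho_zero hopen hW hΩW (fun q hq => (hρ' q hq).of_le h1le) p hpW hpf
  have hHC : HC ε (k + 2) ρ p := by
    refine HC.of_iterated (hρ' p hpW) ?_
    obtain ⟨r, hr, hball⟩ := Metric.isOpen_iff.1 hW p hpW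
    refine ⟨C, r, C.2, hr, fun y hy y' hy' => ?_⟩
    have := hC.dist_le (hball hy) (hball hy')
    rwa [dist_eq_norm, dist_eq_norm, Real.coe_toNNReal _ hε.le] at this
  have hdp := hd p ⟨hpf, hpW⟩
  obtain ⟨d, d1, d2, d3, d4, d5⟩ := signed_dist (m := k + 1) hε hε1 (by omega) hHC h0 hdp
  refine ⟨d, d1, ?_, ?_⟩
  · exact bd_eq hopen hpf hW hpW hΩW (hρ.of_le h1le) hdp d5
  · intro X hX hell
    have hN : 0 < ‖fderiv ℝ ρ p‖⁻¹ := inv_pos.2 (norm_pos_iff.2 hdp)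
    have hz : fderiv ℝ ρ p X = 0 ∧ fderiv ℝ ρ p (Complex.I • X) = 0 := by
      have h1 := congrArg Complex.re hell
      have h2 := congrArg Complex.im hell
      rw [d3] at h1 h2
      simp [ell] at h1 h2
      have h3 := norm_ne_zero_iff.2 hdp
      constructor
      · rcases h1 with h1 | h1
        · exact absurd h1 hdp
        · exact h1
      · rcases h2 with h2 | h2
        · exact absurd h2 hdp
        · exact h2
    have hl := hlev p ⟨hpf, hpW⟩ X hX (by rw [cderiv_eq, ell, hz.1, hz.2]; simp)
    have hdiff : DifferentiableAt ℝ (fderiv ℝ ρ) p := by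
      have : ContDiffAt ℝ 1 (fderiv ℝ ρ) p := (hρ' p hpW).fderiv_right (by exact_mod_cast (by omega : 1 + 1 ≤ k + 2))
      exact this.differentiableAt (by norm_num)
    rw [levi_eq hdiff] at hl
    rw [lv, d4 X hz.1, d4 _ hz.2]
    have := mul_pos hN hl
    linarith

end KL

namespace KL
open Filter Topology
set_option maxSynthPendingDepth 3

theorem taylor_u {n : ℕ} {ε : ℝ} (hε : 0 < ε) {k : ℕ} (hk : k = 0 ∨ k = 1) {d : Cn n → ℝ} {p : Cn n}
    (hd : HC ε (k + 2) d p) : ∃ (M r : ℝ) (T : Cn n → Tri (Cn n)), 0 ≤ M ∧ 0 < r ∧ (∀ z ∈ ball p r, ‖T z‖ ≤ M) ∧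
      ∀ z h, z ∈ ball p r → z + h ∈ ball p r →
        |d (z + h) - (d z + fderiv ℝ d z h + (1 / 2 : ℝ) * fderiv ℝ (fderiv ℝ d) z h h + T z h h h)|
          ≤ M * ‖h‖ ^ (2 + ((k : ℝ) + ε)) := by
  rcases hk with rfl | rfl
  · have hd' : HC ε 2 d p := hd
    obtain ⟨C, r, hC, hr, H⟩ := taylor2 hε hd'
    refine ⟨C, r, fun _ => 0, hC, hr, fun z _ => by simpa using hC, fun z h hz hzh => ?_⟩
    have := H z h hz hzh
    have e : (2 : ℝ) + (((0 : ℕ) : ℝ) + ε) = ε + 2 := by push_cast; ring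
    rw [e]
    simpa [Real.norm_eq_abs] using this
  · have hd' : HC ε 3 d p := hd
    obtain ⟨C, r, hC, hr, H⟩ := taylor3 hε hd'
    have h3 : HC ε 0 (fderiv ℝ (fderiv ℝ (fderiv ℝ d))) p := hd'.2.2.2
    have hc : ContinuousAt (fderiv ℝ (fderiv ℝ (fderiv ℝ d))) p := (h3.contDiffAt hε).continuousAt
    have hev : ∀ᶠ z in 𝓝 p, ‖fderiv ℝ (fderiv ℝ (fderiv ℝ d)) z‖ < ‖fderiv ℝ (fderiv ℝ (fderiv ℝ d)) p‖ + 1 :=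
      hc.norm.eventually_lt continuousAt_const (by linarith)
    obtain ⟨s, hs, hb⟩ := Metric.eventually_nhds_iff_ball.1 hev
    refine ⟨max C (‖fderiv ℝ (fderiv ℝ (fderiv ℝ d)) p‖ + 1), min r s,
      fun z => (1 / 6 : ℝ) • fderiv ℝ (fderiv ℝ (fderiv ℝ d)) z, le_max_of_le_left hC, lt_min hr hs, ?_, ?_⟩
    · intro z hz
      have h1 := hb z (ball_subset_ball (min_le_right _ _) hz)
      refine le_trans ?_ (le_max_right _ _)
      rw [norm_smul]
      have h0 := norm_nonneg (fderiv ℝ (fderiv ℝ (fderiv ℝ d)) z)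
      have : ‖(1 / 6 : ℝ)‖ = 1 / 6 := by norm_num
      rw [this]
      linarith
    · intro z h hz hzh
      have := H z h (ball_subset_ball (min_le_left _ _) hz) (ball_subset_ball (min_le_left _ _) hzh)
      have e : (2 : ℝ) + (((1 : ℕ) : ℝ) + ε) = ε + 3 := by push_cast; ring
      rw [e]
      have h2 : C * ‖h‖ ^ (ε + 3) ≤ max C (‖fderiv ℝ (fderiv ℝ (fderiv ℝ d)) p‖ + 1) * ‖h‖ ^ (ε + 3) := by
        gcongr
        exact le_max_left _ _
      refine le_trans ?_ h2
      simpa [Real.norm_eq_abs] using this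

theorem kob_nonempty {n : ℕ} {Ω : Set (Cn n)} (hopen : IsOpen Ω) {z : Cn n} (hz : z ∈ Ω) (X : Cn n) :
    {r : ℝ | ∃ (α : ℂ) (φ : ℂ → Cn n),
    DifferentiableOn ℂ φ (Metric.ball 0 1) ∧ Set.MapsTo φ (Metric.ball 0 1) Ω ∧
    φ 0 = z ∧ α • deriv φ 0 = X ∧ r = ‖α‖}.Nonempty := by
  obtain ⟨e, he, hb⟩ := Metric.isOpen_iff.1 hopen z hz
  obtain ⟨t, ht⟩ : ∃ t : ℝ, t = e / (‖X‖ + 1) := ⟨_, rfl⟩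
  have htp : 0 < t := by rw [ht]; positivity
  have hder : ∀ ζ : ℂ, HasDerivAt (fun ζ : ℂ => z + ζ • ((t : ℂ) • X)) ((t : ℂ) • X) ζ := by
    intro ζ
    have := ((hasDerivAt_id ζ).smul_const ((t : ℂ) • X)).const_add z
    simpa using this
  refine ⟨_, ((t : ℂ))⁻¹, fun ζ => z + ζ • ((t : ℂ) • X), fun ζ _ => (hder ζ).differentiableAt.differentiableWithinAt,
    ?_, by simp, ?_, rfl⟩
  · intro ζ hζ
    apply hb
    rw [mem_ball_zero_iff] at hζ
    rw [mem_ball, dist_eq_norm, add_sub_cancel_left, norm_smul, norm_smul, Complex.norm_real, Real.norm_eq_abs,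
      abs_of_pos htp]
    have h1 : t * ‖X‖ < e := by
      rw [ht, div_mul_eq_mul_div, div_lt_iff₀ (by positivity)]
      nlinarith
    have h2 : 0 ≤ t * ‖X‖ := by positivity
    nlinarith
  · rw [(hder 0).deriv, smul_smul, inv_mul_cancel₀ (by exact_mod_cast htp.ne'), one_smul]

theorem sndfd_eq {n : ℕ} {f d : Cn n → ℝ} {z : Cn n} (h : f =ᶠ[𝓝 z] d)
    (hd : DifferentiableAt ℝ (fderiv ℝ d) z) (X : Cn n) :
    cderiv f z X = ell (fderiv ℝ d z) X ∧
    leviForm (fun w => -(f w)) z X = lv (fderiv ℝ (fderiv ℝ d) z) X := by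
  constructor
  · rw [cderiv_eq, h.fderiv_eq]
  · have h1 : fderiv ℝ (fun w => -(f w)) =ᶠ[𝓝 z] fun w => -(fderiv ℝ d w) := by
      have h2 : fderiv ℝ f =ᶠ[𝓝 z] fderiv ℝ d := h.fderiv
      filter_upwards [h2] with w hw
      rw [fderiv_fun_neg, hw]
    have h3 : DifferentiableAt ℝ (fderiv ℝ (fun w => -(f w))) z := hd.neg.congr_of_eventuallyEq h1
    rw [levi_eq h3, h1.fderiv_eq, fderiv_fun_neg, lv]
    simp only [ContinuousLinearMap.neg_apply]
    ring

theorem final {n : ℕ} {ε : ℝ} (hε : 0 < ε) (hε1 : ε ≤ 1) {k : ℕ} (hk : k = 0 ∨ k = 1)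
    {Ω : Set (Cn n)} (hopen : IsOpen Ω) {p : Cn n} (hp : IsStrictPscPtHolder Ω p (k + 2) ε) :
    ∃ (C : ℝ) (U : Set (Cn n)), 0 < C ∧ IsOpen U ∧ p ∈ U ∧
      ∀ z ∈ Ω ∩ U, ∀ X : Cn n,
        (1 - C * bdist Ω z ^ (((k : ℝ) + ε) / 2)) * Mfun Ω z X ≤ kobayashi Ω z X := by
  have hpf : p ∈ frontier Ω := hp.1
  obtain ⟨d, hdHC, hdΩ, hpos⟩ := setup hε hε1 hopen hp
  obtain ⟨M, r, T, hM, hr, hT, htay⟩ := taylor_u hε hk hdHC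
  have hτ : 0 < (k : ℝ) + ε := by positivity
  have hτ2 : (k : ℝ) + ε ≤ 2 := by
    rcases hk with rfl | rfl
    · push_cast; linarith
    · push_cast; linarith
  have hC2 : ContDiffAt ℝ 2 d p := by
    have := hdHC.contDiffAt hε
    exact this.of_le (by exact_mod_cast (by omega : 2 ≤ k + 2))
  have hC1 : ContDiffAt ℝ 1 (fderiv ℝ d) p := hC2.fderiv_right (by norm_num)
  have hC0 : ContDiffAt ℝ 0 (fderiv ℝ (fderiv ℝ d)) p := hC1.fderiv_right (by norm_num)
  obtain ⟨K, c, hK, hc, hpn⟩ := pos_near hC1.continuousAt hC0.continuousAt hpos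
  have hA : ∀ᶠ z in 𝓝 p, ‖fderiv ℝ d z‖ < ‖fderiv ℝ d p‖ + 1 :=
    hC1.continuousAt.norm.eventually_lt continuousAt_const (by linarith)
  have hB : ∀ᶠ z in 𝓝 p, ‖fderiv ℝ (fderiv ℝ d) z‖ < ‖fderiv ℝ (fderiv ℝ d) p‖ + 1 :=
    hC0.continuousAt.norm.eventually_lt continuousAt_const (by linarith)
  have hev2 : ∀ᶠ z in 𝓝 p, ContDiffAt ℝ 2 d z := hC2.eventually (by simp)
  obtain ⟨M', hM'⟩ : ∃ x : ℝ, x = max M (max (‖fderiv ℝ d p‖ + 1) (‖fderiv ℝ (fderiv ℝ d) p‖ + 1)) := ⟨_, rfl⟩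
  have hMM : M ≤ M' := by rw [hM']; exact le_max_left _ _
  have hAM : ‖fderiv ℝ d p‖ + 1 ≤ M' := by rw [hM']; exact (le_max_left _ _).trans (le_max_right _ _)
  have hBM : ‖fderiv ℝ (fderiv ℝ d) p‖ + 1 ≤ M' := by
    rw [hM']; exact (le_max_right _ _).trans (le_max_right _ _)
  obtain ⟨C, c', ρ0, hC, hc', hc'1, hρ0, hloc⟩ := local_data n (hM.trans hMM) hc hK hτ hτ2
  obtain ⟨s0, hs0, hball⟩ := Metric.eventually_nhds_iff_ball.1 hdΩ
  obtain ⟨ρ1, hρ1⟩ : ∃ x : ℝ, x = min ρ0 (min (r / 2) (s0 / 2)) / 2 := ⟨_, rfl⟩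
  have hρ1p : 0 < ρ1 := by rw [hρ1]; positivity
  have q1 : ρ1 ≤ ρ0 := by
    have := min_le_left ρ0 (min (r / 2) (s0 / 2))
    rw [hρ1]; linarith
  have q2 : ρ1 < r / 2 := by
    have := (min_le_right ρ0 (min (r / 2) (s0 / 2))).trans (min_le_left _ _)
    rw [hρ1]; linarith
  have q3 : ρ1 < s0 / 2 := by
    have := (min_le_right ρ0 (min (r / 2) (s0 / 2))).trans (min_le_right _ _)
    rw [hρ1]; linarith
  obtain ⟨C', δ0, hC', hδ0, hcore⟩ := core (E := Cn n) (V := Cn n) hτ hτ2 hC hc' hc'1 hK hρ1p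
  obtain ⟨s1, hs1, hb1⟩ := Metric.eventually_nhds_iff_ball.1 (hA.and (hB.and (hev2.and hpn)))
  obtain ⟨u, hu⟩ : ∃ x : ℝ, x = min s1 (min δ0 (min (r / 2) (s0 / 2))) := ⟨_, rfl⟩
  have hup : 0 < u := by rw [hu]; positivity
  have u1 : u ≤ s1 := by rw [hu]; exact min_le_left _ _
  have u2 : u ≤ δ0 := by rw [hu]; exact (min_le_right _ _).trans (min_le_left _ _)
  have u3 : u ≤ r / 2 := by
    rw [hu]; exact (min_le_right _ _).trans ((min_le_right _ _).trans (min_le_left _ _))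
  have u4 : u ≤ s0 / 2 := by
    rw [hu]; exact (min_le_right _ _).trans ((min_le_right _ _).trans (min_le_right _ _))
  refine ⟨C', ball p u, hC', isOpen_ball, mem_ball_self hup, ?_⟩
  rintro z ⟨hzΩ, hzU⟩ X
  obtain ⟨zA, zB, z2, zpos⟩ := hb1 z (ball_subset_ball u1 hzU)
  have hzu : dist z p < u := hzU
  have hzs : z ∈ ball p s0 := by rw [mem_ball]; linarith
  have hzr : z ∈ ball p r := by rw [mem_ball]; linarith
  obtain ⟨hbd, hdz⟩ := hball z hzs hzΩ
  have hsym : ∀ x y, fderiv ℝ (fderiv ℝ d) z x y = fderiv ℝ (fderiv ℝ d) z y x := by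
    have h := z2.isSymmSndFDerivAt (by simp)
    exact fun x y => h x y
  have hdd : DifferentiableAt ℝ (fderiv ℝ d) z :=
    (z2.fderiv_right (m := 1) (by norm_num)).differentiableAt (by norm_num)
  have heq : bdist Ω =ᶠ[𝓝 z] d := by
    filter_upwards [hopen.mem_nhds hzΩ, isOpen_ball.mem_nhds hzs] with w hw hw2
    exact (hball w hw2 hw).1
  obtain ⟨s, g, hs, hg, hsz, hgz, hDs, hDg, hest⟩ := hloc (fderiv ℝ d z) (fderiv ℝ (fderiv ℝ d) z) (T z)
    (zA.le.trans hAM) (zB.le.trans hBM) ((hT z hzr).trans hMM) hsym zpos z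
  have hdδ : d z ≤ δ0 := by
    rw [← hbd]
    have : bdist Ω z ≤ dist z p := Metric.infDist_le_dist_of_mem hpf
    linarith
  have hcr := hcore Ω z d s g hs hg hsz hgz hzΩ hdδ (by
    intro w hw hwz
    have hwp : dist w p ≤ dist w z + dist z p := dist_triangle _ _ _
    have hws : w ∈ ball p s0 := by rw [mem_ball]; linarith
    have hwr : w ∈ ball p r := by rw [mem_ball]; linarith
    refine ⟨(hball w hws hw).2, ?_⟩
    refine hest w (hwz.trans q1) (d z) (d w) ?_
    have := htay z (w - z) hzr (by rwa [add_sub_cancel])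
    rw [add_sub_cancel, ← dist_eq_norm] at this
    refine this.trans ?_
    gcongr)
  have hM2 : ∀ Y : Cn n, Mfun Ω z Y = Real.sqrt (((1 - K * d z) * ‖fderiv ℂ s z Y‖ ^ 2
      + d z * ‖fderiv ℂ g z Y‖ ^ 2) / d z ^ 2) := by
    intro Y
    obtain ⟨e1, e2⟩ := sndfd_eq heq hdd Y
    rw [Mfun, e1, e2, hbd, hDs, hDg]
    congr 1
    field_simp
    ring
  rw [hbd]
  obtain ⟨x, hx⟩ : ∃ x : ℝ, x = C' * d z ^ (((k : ℝ) + ε) / 2) := ⟨_, rfl⟩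
  have hx0 : 0 ≤ x := by rw [hx]; positivity
  rw [← hx]
  refine le_csInf (kob_nonempty hopen hzΩ X) ?_
  rintro _ ⟨α, φ, hφ, hφΩ, hφ0, rfl, rfl⟩
  have h1 := hcr φ hφ hφΩ hφ0
  rw [← hx] at h1
  have h2 : Mfun Ω z (α • deriv φ 0) = ‖α‖ * Mfun Ω z (deriv φ 0) := by
    rw [hM2, hM2, map_smul, map_smul, norm_smul, norm_smul]
    have : ((1 - K * d z) * (‖α‖ * ‖fderiv ℂ s z (deriv φ 0)‖) ^ 2
        + d z * (‖α‖ * ‖fderiv ℂ g z (deriv φ 0)‖) ^ 2) / d z ^ 2 =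
        ‖α‖ ^ 2 * (((1 - K * d z) * ‖fderiv ℂ s z (deriv φ 0)‖ ^ 2
        + d z * ‖fderiv ℂ g z (deriv φ 0)‖ ^ 2) / d z ^ 2) := by ring
    rw [this, Real.sqrt_mul (by positivity), Real.sqrt_sq (norm_nonneg _)]
  have h3 : Mfun Ω z (deriv φ 0) ≤ 1 + x := by
    rw [hM2]
    exact Real.sqrt_le_iff.2 ⟨by linarith, h1⟩
  have h4 : 0 ≤ Mfun Ω z (deriv φ 0) := Real.sqrt_nonneg _
  rw [h2]
  have h5 : (1 - x) * Mfun Ω z (deriv φ 0) ≤ 1 := by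
    by_cases hx1 : x ≤ 1
    · nlinarith
    · nlinarith
  have := mul_le_mul_of_nonneg_left h5 (norm_nonneg α)
  linarith

end KL

/-- Under assumption (∗), the Kobayashi metric satisfies the lower estimate
`κ_Ω(z;X) ≥ (1 - C·δ_Ω(z)^ε_k)·M(z;X)` near `p`. -/
theorem kobayashi_lower_estimate (n : ℕ) (ε : ℝ) (hε : ε ∈ Set.Ioc (0 : ℝ) 1) (k : ℕ) (hk : k = 0 ∨ k = 1)
    (Ω : Set (Cn n)) (hopen : IsOpen Ω) (hconn : IsConnected Ω) (p : Cn n) (hp : IsStrictPscPtHolder Ω p (k + 2) ε) :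
    ∃ (C : ℝ) (U : Set (Cn n)), 0 < C ∧ IsOpen U ∧ p ∈ U ∧
      ∀ z ∈ Ω ∩ U, ∀ X : Cn n,
        (1 - C * bdist Ω z ^ (((k : ℝ) + ε) / 2)) * Mfun Ω z X ≤ kobayashi Ω z X := by
  exact KL.final hε.1 hε.2 hk hopen hp

end
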